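/- arXiv:1907.04930 — 2 statements merged into one kernel-verified Lean document; each statement's English description precedes it below -/
import Mathlib

section
/- Let r > k ≥ 2 be fixed integers. Then liminf_{n→∞} f_r(n, 3r-2k, 3)/n^k ≥ 1/(r^k - r). More precisely, there exist a constant a and δ ≤ 0.525 such that for every n ≥ 1, there is a G_r(3r-2k,3)-free r-uniform hypergraph on n vertices with at least n^k/(r^k - r) - a·n^{k-1+δ} edges, in which any two distinct edges intersect in at most k-1 vertices. -/
open Finset Filter

/-- `sparseTuranNumber n r v e` is `f_r(n,v,e)`. -/
noncomputable def sparseTuranNumber (n r v e : ℕ) : ℕ :=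
  sSup {m | ∃ H : Finset (Finset (Fin n)),
    (∀ A ∈ H, A.card = r) ∧
    (∀ S ⊆ H, S.card = e → v + 1 ≤ (S.sup id).card) ∧
    H.card = m}

/-!
Let `G` be an `r × k` matrix over a finite ring `R` such that the code `x ↦ G x` is strongly
`3`-perfect hashing. The graphs of the codewords form an `r`-partite `r`-graph on `r * |R|`
vertices with `|R| ^ k` edges, which is `G_r(3r-2k,3)`-free with pairwise intersections smaller
than `k`. Every edge meets each of the `r` parts only once, so both properties survive when a
hypergraph of the same kind is placed on every part. For the largest number `g n` of edges this
gives `g n ≥ m ^ k + r * g m`, where `r * m ≤ n` and `m = |R|`, and iterating produces the factor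
`∑ r ^ (-j(k-1)) / r ^ k = 1 / (r ^ k - r)`.

Strong hashing only asks that finitely many determinants, polynomials in the entries of `G` that
do not vanish identically, be units. A generic integer matrix makes all these determinants divide
some `D ≠ 0`, so its reduction works over `ZMod m` for every `m` coprime to `D`. Such `m` have
bounded gaps, which replaces the estimate for prime gaps and improves the error term.
-/

section SparseTuranNumber

variable {n r v e : ℕ} {H : Finset (Finset (Fin n))}

theorem card_le_sparseTuranNumber (hcard : ∀ A ∈ H, #A = r)
    (hspan : ∀ S ⊆ H, #S = e → v + 1 ≤ #(S.sup id)) : #H ≤ sparseTuranNumber n r v e := by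
  refine le_csSup ⟨Fintype.card (Finset (Fin n)), ?_⟩ ⟨H, hcard, hspan, rfl⟩
  rintro _ ⟨H, -, -, rfl⟩
  exact card_le_univ H

theorem card_filter_superset_lt {k : ℕ} (hv : k + e * (r - k) ≤ v) (hcard : ∀ A ∈ H, #A = r)
    (hspan : ∀ S ⊆ H, #S = e → v + 1 ≤ #(S.sup id)) {B : Finset (Fin n)} (hB : #B = k) :
    #{A ∈ H | B ⊆ A} < e := by
  by_contra! he
  obtain ⟨S, hS, rfl⟩ := exists_subset_card_eq he
  have hS' : ∀ A ∈ S, A ∈ H ∧ B ⊆ A := fun A hA => mem_filter.1 (hS hA)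
  have hsup : S.sup id ⊆ B ∪ S.biUnion (· \ B) := by
    refine Finset.sup_le fun A hA x hx => ?_
    by_cases hxB : x ∈ B
    · exact mem_union_left _ hxB
    · exact mem_union_right _ (mem_biUnion.2 ⟨A, hA, mem_sdiff.2 ⟨hx, hxB⟩⟩)
  have hpetals : #(S.biUnion (· \ B)) ≤ #S * (r - k) :=
    card_biUnion_le_card_mul _ _ _ fun A hA => by
      rw [card_sdiff_of_subset (hS' A hA).2, hcard A (hS' A hA).1, hB]
  have hspanS := hspan S (fun A hA => (hS' A hA).1) rfl
  have := (card_le_card hsup).trans (card_union_le _ _)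
  omega

theorem sparseTuranNumber_le {k : ℕ} (hkr : k ≤ r) (hv : k + e * (r - k) ≤ v) :
    sparseTuranNumber n r v e ≤ n.choose k * (e - 1) := by
  refine csSup_le' ?_
  rintro _ ⟨H, hcard, hspan, rfl⟩
  have hcover : H ⊆ (powersetCard k univ).biUnion fun B => {A ∈ H | B ⊆ A} := by
    intro A hA
    obtain ⟨B, hBA, hB⟩ := exists_subset_card_eq (hkr.trans_eq (hcard A hA).symm)
    simp only [mem_biUnion, mem_powersetCard_univ, mem_filter]
    exact ⟨B, hB, hA, hBA⟩
  calc #H ≤ #(powersetCard k (univ : Finset (Fin n))) * (e - 1) :=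
        (card_le_card hcover).trans <| card_biUnion_le_card_mul _ _ _ fun B hB =>
          Nat.le_sub_one_of_lt <|
            card_filter_superset_lt hv hcard hspan (mem_powersetCard_univ.1 hB)
    _ = n.choose k * (e - 1) := by simp

end SparseTuranNumber

/-- The hypergraphs of the theorem: `r`-uniform, `G_r(3r-2k,3)`-free, and with any two edges
sharing at most `k - 1` vertices. -/
structure IsSparse (r k : ℕ) {α : Type*} [DecidableEq α] (H : Finset (Finset α)) : Prop where
  card_eq : ∀ A ∈ H, #A = r
  card_union : ∀ A ∈ H, ∀ B ∈ H, ∀ C ∈ H, A ≠ B → A ≠ C → B ≠ C →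
    3 * r - 2 * k + 1 ≤ #(A ∪ B ∪ C)
  card_inter : ∀ A ∈ H, ∀ B ∈ H, A ≠ B → #(A ∩ B) ≤ k - 1

theorem card_union_three {α : Type*} [DecidableEq α] (A B C : Finset α) :
    #(A ∪ B ∪ C) + #(A ∩ B) + #(A ∩ C) + #(B ∩ C) = #A + #B + #C + #(A ∩ B ∩ C) := by
  have hAB := card_union_add_card_inter A B
  have hABC := card_union_add_card_inter (A ∪ B) C
  have hinter := card_union_add_card_inter (A ∩ C) (B ∩ C)
  rw [← union_inter_distrib_right, ← inter_inter_distrib_right] at hinter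
  omega

namespace IsSparse

variable {r k : ℕ} {α β ι : Type*} [DecidableEq α] [DecidableEq β]

theorem empty : IsSparse r k (∅ : Finset (Finset α)) := by
  constructor <;> simp

theorem map {H : Finset (Finset α)} (h : IsSparse r k H) (φ : α ↪ β) :
    IsSparse r k (H.map (mapEmbedding φ).toEmbedding) where
  card_eq := by simpa using h.card_eq
  card_union := by simpa [← map_union] using h.card_union
  card_inter := by simpa [← map_inter] using h.card_inter

theorem card_le_sparseTuranNumber {n : ℕ} {H : Finset (Finset (Fin n))} (h : IsSparse r k H) :
    #H ≤ sparseTuranNumber n r (3 * r - 2 * k) 3 := by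
  refine _root_.card_le_sparseTuranNumber h.card_eq fun S hS hS3 => ?_
  obtain ⟨A, B, C, hAB, hAC, hBC, rfl⟩ := card_eq_three.1 hS3
  simpa [union_assoc] using
    h.card_union A (hS (by simp)) B (hS (by simp)) C (hS (by simp)) hAB hAC hBC

section BiUnion

variable [Fintype ι] {H : ι → Finset (Finset α)} (h : ∀ i, IsSparse r k (H i))
  (hdisj : ∀ i j, i ≠ j → ∀ A ∈ H i, ∀ B ∈ H j, #(A ∩ B) ≤ 1)
include h hdisj

theorem biUnion (hk : 2 ≤ k) (hkr : k ≤ r) : IsSparse r k (univ.biUnion H) := by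
  have hcard : ∀ A ∈ univ.biUnion H, #A = r := by
    simpa using fun A i => (h i).card_eq A
  have hinter : ∀ A ∈ univ.biUnion H, ∀ B ∈ univ.biUnion H, A ≠ B → #(A ∩ B) ≤ k - 1 := by
    simp only [mem_biUnion, mem_univ, true_and]
    rintro A ⟨i, hA⟩ B ⟨j, hB⟩ hAB
    by_cases hij : i = j
    · subst hij
      exact (h i).card_inter A hA B hB hAB
    · exact (hdisj i j hij A hA B hB).trans (by omega)
  refine ⟨hcard, fun A hA B hB C hC hAB hAC hBC => ?_, hinter⟩
  have hsum := card_union_three A B C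
  have := hcard A hA
  have := hcard B hB
  have := hcard C hC
  have := hinter A hA B hB hAB
  have := hinter A hA C hC hAC
  have := hinter B hB C hC hBC
  simp only [mem_biUnion, mem_univ, true_and] at hA hB hC
  obtain ⟨i, hA⟩ := hA
  obtain ⟨j, hB⟩ := hB
  obtain ⟨l, hC⟩ := hC
  by_cases hij : i = j
  · subst hij
    by_cases hil : i = l
    · subst hil
      exact (h i).card_union A hA B hB C hC hAB hAC hBC
    · have := hdisj i l hil A hA C hC
      have := hdisj i l hil B hB C hC
      omega
  · have := hdisj i j hij A hA B hB
    by_cases hil : i = l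
    · subst hil
      have := hdisj j i (Ne.symm hij) B hB C hC
      omega
    · have := hdisj i l hil A hA C hC
      omega

theorem card_biUnion (hr : 2 ≤ r) : #(univ.biUnion H) = ∑ i, #(H i) := by
  refine Finset.card_biUnion fun i _ j _ hij => disjoint_left.2 fun A hAi hAj => ?_
  have := hdisj i j hij A hAi A hAj
  rw [inter_self, (h i).card_eq A hAi] at this
  omega

end BiUnion

end IsSparse

open Classical in
/-- The largest number of edges of an `IsSparse r k` hypergraph on `n` vertices. -/
noncomputable def maxSparseCard (r k n : ℕ) : ℕ :=
  ({H | IsSparse r k H} : Finset (Finset (Finset (Fin n)))).sup card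

theorem exists_isSparse_card_eq_maxSparseCard (r k n : ℕ) :
    ∃ H : Finset (Finset (Fin n)), IsSparse r k H ∧ #H = maxSparseCard r k n := by
  classical
  obtain ⟨H, hH, hcard⟩ := exists_mem_eq_sup
    ({H | IsSparse r k H} : Finset (Finset (Finset (Fin n)))) ⟨∅, by simp [IsSparse.empty]⟩ card
  exact ⟨H, by simpa using hH, hcard.symm⟩

theorem IsSparse.card_le_maxSparseCard {r k n : ℕ} {α : Type*} [DecidableEq α] [Fintype α]
    {H : Finset (Finset α)} (h : IsSparse r k H) (hn : Fintype.card α ≤ n) :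
    #H ≤ maxSparseCard r k n := by
  classical
  obtain ⟨φ⟩ := Function.Embedding.nonempty_of_card_le (hn.trans_eq (Fintype.card_fin n).symm)
  rw [← card_map (mapEmbedding φ).toEmbedding]
  exact le_sup (f := card) (mem_filter.2 ⟨mem_univ _, h.map φ⟩)

/-! ### Strongly hashing matrices -/

theorem exists_eval_dvd_of_ne_zero {σ P R : Type*} [Finite P] [CommRing R] [IsDomain R]
    [Infinite R] (f : P → MvPolynomial σ R) :
    ∃ (a : σ → R) (D : R), D ≠ 0 ∧ ∀ p, f p ≠ 0 → MvPolynomial.eval a (f p) ∣ D := by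
  classical
  have := Fintype.ofFinite P
  set g : MvPolynomial σ R := ∏ p with f p ≠ 0, f p
  have hg0 : g ≠ 0 := prod_ne_zero_iff.2 fun p hp => (mem_filter.1 hp).2
  obtain ⟨a, ha⟩ : ∃ a, MvPolynomial.eval a g ≠ 0 := by
    by_contra! h
    exact hg0 (MvPolynomial.funext fun a => by simp [h a])
  exact ⟨a, _, ha, fun p hp => map_dvd _ (dvd_prod_of_mem f (by simpa using hp))⟩

section Coloring

variable {ι : Type*} {q : ℕ}

theorem exists_coloring_meeting_two_of_disjoint {A : Fin q → Finset ι} {m : ℕ}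
    (hdisj : Pairwise (Function.onFun Disjoint A)) (hcard : ∀ s, #(A s) ≤ m)
    (hsum : 2 * m ≤ ∑ s, #(A s)) :
    ∃ f : ι → ℕ, ∀ j < m, ∃ s t x y, s ≠ t ∧ x ∈ A s ∧ y ∈ A t ∧ f x = j ∧ f y = j := by
  -- List the elements block by block. Positions `j` and `j + m` are too far apart to lie in one
  -- block, so coloring the positions modulo `m` works.
  let e : (Σ s, Fin #(A s)) ≃ Fin (∑ s, #(A s)) := finSigmaFinEquiv
  let v : (Σ s, Fin #(A s)) → ι := fun z => (A z.1).equivFin.symm z.2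
  have hvmem : ∀ z, v z ∈ A z.1 := fun z => ((A z.1).equivFin.symm z.2).2
  have hv : Function.Injective v := by
    rintro ⟨s, x⟩ ⟨t, y⟩ h
    obtain rfl : s = t := by
      by_contra hst
      exact disjoint_left.1 (hdisj hst) (hvmem ⟨s, x⟩) (h ▸ hvmem ⟨t, y⟩)
    simpa [v, Subtype.ext_iff.symm] using h
  refine ⟨Function.extend v (fun z => (e z : ℕ) % m) 0, fun j hj => ?_⟩
  let z := e.symm ⟨j, by omega⟩
  let w := e.symm ⟨j + m, by omega⟩
  have hz : (e z : ℕ) = j := by simp [z]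
  have hw : (e w : ℕ) = j + m := by simp [w]
  refine ⟨z.1, w.1, v z, v w, fun hzw => ?_, hvmem z, hvmem w, ?_, ?_⟩
  · generalize z = z, w = w at hz hw hzw
    obtain ⟨s, x⟩ := z
    obtain ⟨t, y⟩ := w
    obtain rfl : s = t := hzw
    simp only [e, finSigmaFinEquiv_apply] at hz hw
    have := y.2.trans_le (hcard s)
    omega
  · rw [hv.extend_apply, hz, Nat.mod_eq_of_lt hj]
  · rw [hv.extend_apply, hw, Nat.add_mod_right, Nat.mod_eq_of_lt hj]

theorem exists_coloring_meeting_two [DecidableEq ι] {Z : Fin q → Finset ι} {T : Finset ι} {k : ℕ}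
    (hq : 2 ≤ q)
    (hinter : ∀ s t, s ≠ t → Z s ∩ Z t = T) (hcard : ∀ s, #(Z s) ≤ k)
    (hsum : 2 * k + (q - 2) * #T ≤ ∑ s, #(Z s)) :
    ∃ f : ι → ℕ, ∀ j < k, ∃ s t x y, s ≠ t ∧ x ∈ Z s ∧ y ∈ Z t ∧ f x = j ∧ f y = j := by
  have hTZ : ∀ s, T ⊆ Z s := fun s => by
    obtain ⟨t, ht⟩ := Fintype.exists_ne_of_one_lt_card (by rwa [Fintype.card_fin]) s
    exact hinter s t ht.symm ▸ inter_subset_left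
  obtain ⟨f, hf⟩ := exists_coloring_meeting_two_of_disjoint (A := fun s => Z s \ T) (m := k - #T)
    (fun s t hst => disjoint_left.2 fun x hxs hxt => (mem_sdiff.1 hxs).2 <|
      hinter s t hst ▸ mem_inter_of_mem (mem_sdiff.1 hxs).1 (mem_sdiff.1 hxt).1)
    (fun s => by
      rw [card_sdiff_of_subset (hTZ s)]
      exact Nat.sub_le_sub_right (hcard s) _)
    (by
      have : ∑ s, #(Z s) = ∑ s, #(Z s \ T) + q * #T := by
        rw [sum_congr rfl fun s _ => (card_sdiff_add_card_eq_card (hTZ s)).symm]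
        simp [sum_add_distrib]
      obtain ⟨q, rfl⟩ := Nat.exists_eq_add_of_le' hq
      rw [add_mul] at this
      rw [Nat.add_sub_cancel] at hsum
      omega)
  let g : ι → ℕ := fun x => if h : x ∈ T then T.equivFin ⟨x, h⟩ else #T + f x
  refine ⟨g, fun j hj => ?_⟩
  rcases lt_or_ge j #T with hjT | hjT
  · let x := T.equivFin.symm ⟨j, hjT⟩
    have hx : g x = j := by simp [g, x]
    exact ⟨⟨0, by omega⟩, ⟨1, by omega⟩, x, x, by simp, hTZ _ x.2, hTZ _ x.2, hx, hx⟩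
  · obtain ⟨s, t, x, y, hst, hx, hy, hfx, hfy⟩ := hf (j - #T) (by omega)
    obtain ⟨hxZ, hxT⟩ := mem_sdiff.1 hx
    obtain ⟨hyZ, hyT⟩ := mem_sdiff.1 hy
    have hgx : g x = #T + f x := dif_neg hxT
    have hgy : g y = #T + f y := dif_neg hyT
    exact ⟨s, t, x, y, hst, hxZ, hyZ, by omega, by omega⟩

end Coloring

theorem fin_three_eq_zero_of_sum_eq_zero {M : Type*} [AddCommMonoid M] {a : Fin 3 → M}
    (hsum : ∑ l, a l = 0) {s t : Fin 3} (hst : s ≠ t) (hs : a s = 0) (ht : a t = 0) : a = 0 := by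
  rw [Fin.sum_univ_three] at hsum
  ext l
  fin_cases s <;> fin_cases t <;> fin_cases l <;> simp_all

section AgreementMatrix

open scoped Matrix

variable {ι R S : Type*} {k : ℕ} [CommRing R] [CommRing S]

/-- The square matrix of the linear forms `u ↦ (G *ᵥ u s) i`, for the pairs `(i, s) = p x`, on the
triples `u : Fin 3 → Fin k → R` of sum zero. Such a triple is encoded by the coordinates of `u 0`
and `u 1`, so that `u 2 = -(u 0 + u 1)`. -/
def agreementMatrix (G : Matrix ι (Fin k) R) (p : Fin 2 × Fin k → ι × Fin 3) :
    Matrix (Fin 2 × Fin k) (Fin 2 × Fin k) R :=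
  .of fun x y => !![1, 0; 0, 1; -1, -1] (p x).2 y.1 * G (p x).1 y.2

theorem map_agreementMatrix (φ : R →+* S) (G : Matrix ι (Fin k) R)
    (p : Fin 2 × Fin k → ι × Fin 3) :
    (agreementMatrix G p).map φ = agreementMatrix (G.map φ) p := by
  ext x ⟨b, l⟩
  simp only [agreementMatrix, Matrix.map_apply, Matrix.of_apply, map_mul]
  congr 1
  generalize (p x).2 = s
  fin_cases s <;> fin_cases b <;> simp

theorem agreementMatrix_mulVec (G : Matrix ι (Fin k) R) (p : Fin 2 × Fin k → ι × Fin 3)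
    {u : Fin 3 → Fin k → R} (hu : ∑ s, u s = 0) (x : Fin 2 × Fin k) :
    (agreementMatrix G p *ᵥ fun y => u y.1.castSucc y.2) x = (G *ᵥ u (p x).2) (p x).1 := by
  have hu2 : u 2 = -u 0 - u 1 := by
    rw [Fin.sum_univ_three] at hu
    linear_combination hu
  simp only [agreementMatrix, Matrix.mulVec, dotProduct, Matrix.of_apply, Fintype.sum_prod_type,
    Fin.sum_univ_two, ← sum_add_distrib]
  refine sum_congr rfl fun l _ => ?_
  generalize (p x).2 = s
  fin_cases s
  · simp
  · simp
  · simp [hu2]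
    ring

theorem exists_det_agreementMatrix_dvd [Finite ι] [IsDomain R] [Infinite R] :
    ∃ (G : Matrix ι (Fin k) R) (D : R), D ≠ 0 ∧ ∀ (p : Fin 2 × Fin k → ι × Fin 3)
      (G₀ : Matrix ι (Fin k) R), (agreementMatrix G₀ p).det ≠ 0 →
        (agreementMatrix G p).det ∣ D := by
  have heval (a : ι × Fin k → R) (p : Fin 2 × Fin k → ι × Fin 3) :
      MvPolynomial.eval a (agreementMatrix (Matrix.mvPolynomialX ι (Fin k) R) p).det =
        (agreementMatrix (.of fun i l => a (i, l)) p).det := by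
    rw [RingHom.map_det, RingHom.mapMatrix_apply, map_agreementMatrix]
    congr
    ext i l
    simp
  obtain ⟨a, D, hD, ha⟩ := exists_eval_dvd_of_ne_zero fun p : Fin 2 × Fin k → ι × Fin 3 =>
    (agreementMatrix (Matrix.mvPolynomialX ι (Fin k) R) p).det
  refine ⟨.of fun i l => a (i, l), D, hD, fun p G₀ hG₀ => ?_⟩
  rw [← heval]
  refine ha p fun h0 => hG₀ ?_
  have := heval (fun x => G₀ x.1 x.2) p
  rw [h0, map_zero] at this
  exact this.symm

theorem exists_det_agreementMatrix_ne_zero [DecidableEq ι] [IsDomain R]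
    {Z : Fin 3 → Finset ι} {T : Finset ι}
    (hinter : ∀ s t, s ≠ t → Z s ∩ Z t = T) (hcard : ∀ s, #(Z s) ≤ k)
    (hsum : 2 * k + #T ≤ ∑ s, #(Z s)) :
    ∃ (p : Fin 2 × Fin k → ι × Fin 3) (G₀ : Matrix ι (Fin k) R),
      (∀ x, (p x).1 ∈ Z (p x).2) ∧ (agreementMatrix G₀ p).det ≠ 0 := by
  obtain ⟨f, hf⟩ := exists_coloring_meeting_two (by simp) hinter hcard (by simpa using hsum)
  choose s t i i' hst hi hi' hfi hfi' using fun j : Fin k => hf j j.2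
  -- With unit vectors as rows, the forms only read off coordinates of the `u s`, and every
  -- coordinate `j` is read off for two different `s`.
  let p (x : Fin 2 × Fin k) : ι × Fin 3 := if x.1 = 0 then (i x.2, s x.2) else (i' x.2, t x.2)
  let G₀ : Matrix ι (Fin k) R := .of fun i l => if f i = l then 1 else 0
  have hG₀ {i : ι} {j : Fin k} (hij : f i = j) (v : Fin k → R) : (G₀ *ᵥ v) i = v j := by
    simp [G₀, Matrix.mulVec, dotProduct, hij, Fin.val_inj]
  refine ⟨p, G₀, fun x => ?_, fun hdet => ?_⟩
  · by_cases hx : x.1 = 0 <;> simp [p, hx, hi, hi']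
  obtain ⟨w, hw0, hw⟩ := Matrix.exists_mulVec_eq_zero_iff.2 hdet
  let u : Fin 3 → Fin k → R :=
    ![fun l => w (0, l), fun l => w (1, l), fun l => -w (0, l) - w (1, l)]
  have hu : ∑ s, u s = 0 := by
    ext l
    simp [u, Fin.sum_univ_three]
  have hwu : w = fun y => u y.1.castSucc y.2 := by
    ext ⟨b, l⟩
    fin_cases b <;> rfl
  have huj (j : Fin k) : u (s j) j = 0 ∧ u (t j) j = 0 := by
    have h0 := agreementMatrix_mulVec G₀ p hu (0, j)
    have h1 := agreementMatrix_mulVec G₀ p hu (1, j)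
    rw [← hwu, hw] at h0 h1
    simp only [p] at h0 h1
    exact ⟨by simpa [hG₀ (hfi j)] using h0.symm, by simpa [hG₀ (hfi' j)] using h1.symm⟩
  refine hw0 (funext fun ⟨b, j⟩ => ?_)
  rw [hwu]
  exact congrFun (fin_three_eq_zero_of_sum_eq_zero (a := fun s => u s j)
    (by simpa using congrFun hu j) (hst j) (huj j).1 (huj j).2) b.castSucc

end AgreementMatrix

section StronglyHashing

open scoped Matrix

variable {ι R : Type*} [DecidableEq ι] {k : ℕ} [CommRing R]

/-- Strong `3`-perfect hashing for the linear code `x ↦ G *ᵥ x`, in homogeneous form: `u` stands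
for the cyclic differences `x - y`, `y - z`, `z - x` of three messages and `Z s` for the set of
positions at which the corresponding two codewords agree. Taking all `Z s` equal, it also contains
the minimum distance of the code. -/
def IsStronglyHashing (G : Matrix ι (Fin k) R) : Prop :=
  ∀ (Z : Fin 3 → Finset ι) (T : Finset ι), (∀ s t, s ≠ t → Z s ∩ Z t = T) →
    (∀ s, #(Z s) ≤ k) → 2 * k + #T ≤ ∑ s, #(Z s) →
      ∀ u : Fin 3 → Fin k → R, ∑ s, u s = 0 → (∀ s, ∀ i ∈ Z s, (G *ᵥ u s) i = 0) → u = 0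

theorem exists_isStronglyHashing (ι : Type*) [Finite ι] [DecidableEq ι] (k : ℕ) :
    ∃ (G : Matrix ι (Fin k) ℤ) (D : ℕ), 0 < D ∧ ∀ (R : Type*) [CommRing R], IsUnit (D : R) →
      IsStronglyHashing (G.map (Int.cast : ℤ → R)) := by
  obtain ⟨G, D, hD, hdvd⟩ := exists_det_agreementMatrix_dvd (ι := ι) (k := k) (R := ℤ)
  refine ⟨G, D.natAbs, Int.natAbs_pos.2 hD, fun R _ hunit Z T hinter hcard hsum u hu hvanish => ?_⟩
  obtain ⟨p, G₀, hp, hdet⟩ := exists_det_agreementMatrix_ne_zero (R := ℤ) hinter hcard hsum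
  have hdetR : IsUnit (agreementMatrix (G.map (Int.castRingHom R)) p).det := by
    rw [← map_agreementMatrix, ← RingHom.mapMatrix_apply, ← RingHom.map_det]
    refine isUnit_of_dvd_unit (map_dvd _ (Int.dvd_natAbs.2 (hdvd p G₀ hdet))) ?_
    simpa using hunit
  have hker : (fun y : Fin 2 × Fin k => u y.1.castSucc y.2) = 0 := by
    refine Matrix.mulVec_injective_of_isUnit ((Matrix.isUnit_iff_isUnit_det _).2 hdetR) ?_
    ext x
    rw [agreementMatrix_mulVec _ _ hu, Matrix.mulVec_zero]
    exact hvanish _ _ (hp x)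
  have h0 : u 0 = 0 := funext fun l => congrFun hker (0, l)
  have h1 : u 1 = 0 := funext fun l => congrFun hker (1, l)
  exact fin_three_eq_zero_of_sum_eq_zero hu zero_ne_one h0 h1

end StronglyHashing

/-! ### Code hypergraphs -/

section GraphEdge

variable {ι α : Type*} [DecidableEq ι] [DecidableEq α]

theorem map_sectR_inter_map_sectR_eq_empty {i j : ι} (hij : i ≠ j) (A B : Finset α) :
    A.map (Function.Embedding.sectR i α) ∩ B.map (Function.Embedding.sectR j α) = ∅ := by
  refine disjoint_iff_inter_eq_empty.1 (disjoint_left.2 fun x hxA hxB => hij ?_)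
  simp only [Finset.mem_map, Function.Embedding.sectR_apply] at hxA hxB
  obtain ⟨a, -, rfl⟩ := hxA
  obtain ⟨b, -, hb⟩ := hxB
  exact (congrArg Prod.fst hb).symm

variable [Fintype ι]

/-- The set of positions at which the words `f` and `g` agree. -/
def agreement (f g : ι → α) : Finset ι :=
  {i | f i = g i}

omit [DecidableEq ι] in
theorem mem_agreement {f g : ι → α} {i : ι} : i ∈ agreement f g ↔ f i = g i := by
  simp [agreement]

/-- The graph of a word `f`, as an edge meeting every fibre of `ι × α → ι` exactly once. -/
def graphEdge (f : ι → α) : Finset (ι × α) :=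
  univ.image fun i => (i, f i)

theorem mem_graphEdge {f : ι → α} {x : ι × α} : x ∈ graphEdge f ↔ f x.1 = x.2 := by
  obtain ⟨i, a⟩ := x
  simp [graphEdge]

theorem card_graphEdge_inter (f : ι → α) (S : Finset (ι × α)) :
    #(graphEdge f ∩ S) = #{i | (i, f i) ∈ S} := by
  rw [graphEdge, ← filter_mem_eq_inter, filter_image, card_image_of_injective]
  exact fun i j hij => congrArg Prod.fst hij

theorem card_graphEdge (f : ι → α) : #(graphEdge f) = Fintype.card ι := by
  simpa [mem_graphEdge] using card_graphEdge_inter f (graphEdge f)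

theorem card_graphEdge_inter_graphEdge (f g : ι → α) :
    #(graphEdge f ∩ graphEdge g) = #(agreement f g) := by
  simp [card_graphEdge_inter, mem_graphEdge, agreement, eq_comm]

theorem card_graphEdge_inter_graphEdge_inter_graphEdge (f g h : ι → α) :
    #(graphEdge f ∩ graphEdge g ∩ graphEdge h) = #(agreement f g ∩ agreement f h) := by
  simp [inter_assoc, card_graphEdge_inter, mem_graphEdge, agreement, ← filter_and, eq_comm]

theorem card_graphEdge_inter_map_sectR_le (f : ι → α) (i : ι) (A : Finset α) :
    #(graphEdge f ∩ A.map (Function.Embedding.sectR i α)) ≤ 1 := by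
  rw [card_graphEdge_inter]
  refine card_le_one.2 fun j hj l hl => ?_
  simp_all

end GraphEdge

namespace IsStronglyHashing

open scoped Matrix

variable {ι R : Type*} [Fintype ι] [DecidableEq ι] {k : ℕ} [CommRing R] [DecidableEq R]
  {G : Matrix ι (Fin k) R} (hG : IsStronglyHashing G)
include hG

theorem card_agreement_lt {x y : Fin k → R} (hxy : x ≠ y) :
    #(agreement (G *ᵥ x) (G *ᵥ y)) < k := by
  by_contra! hk
  obtain ⟨W, hW, rfl⟩ := exists_subset_card_eq hk
  have hW0 : ∀ i ∈ W, (G *ᵥ x) i = (G *ᵥ y) i := fun i hi => mem_agreement.1 (hW hi)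
  have hu := hG (fun _ => W) W (fun _ _ _ => inter_self W) (fun _ => le_rfl)
    (by rw [Fin.sum_const, smul_eq_mul]; omega)
    ![x - y, y - x, 0] (by simp [Fin.sum_univ_three]) fun s i hi => by
      fin_cases s <;> simp [Matrix.mulVec_sub, hW0 i hi]
  exact hxy (sub_eq_zero.1 (congrFun hu 0))

theorem card_agreement_add_lt {x y z : Fin k → R} (hxy : x ≠ y) (hxz : x ≠ z) (hyz : y ≠ z) :
    #(agreement (G *ᵥ x) (G *ᵥ y)) + #(agreement (G *ᵥ x) (G *ᵥ z)) +
        #(agreement (G *ᵥ y) (G *ᵥ z)) <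
      2 * k + #(agreement (G *ᵥ x) (G *ᵥ y) ∩ agreement (G *ᵥ x) (G *ᵥ z)) := by
  by_contra! hle
  let Z : Fin 3 → Finset ι := ![agreement (G *ᵥ x) (G *ᵥ y), agreement (G *ᵥ x) (G *ᵥ z),
    agreement (G *ᵥ y) (G *ᵥ z)]
  have hinter : ∀ s t, s ≠ t → Z s ∩ Z t = Z 0 ∩ Z 1 := by
    intro s t hst
    ext i
    have h0 : i ∈ Z 0 ↔ (G *ᵥ x) i = (G *ᵥ y) i := mem_agreement
    have h1 : i ∈ Z 1 ↔ (G *ᵥ x) i = (G *ᵥ z) i := mem_agreement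
    have h2 : i ∈ Z 2 ↔ (G *ᵥ y) i = (G *ᵥ z) i := mem_agreement
    fin_cases s <;> fin_cases t <;> grind
  have hcard : ∀ s, #(Z s) ≤ k := by
    intro s
    fin_cases s
    exacts [(hG.card_agreement_lt hxy).le, (hG.card_agreement_lt hxz).le,
      (hG.card_agreement_lt hyz).le]
  have hu := hG Z _ hinter hcard (by simpa [Fin.sum_univ_three, Z] using hle)
    ![x - y, z - x, y - z] (by simp [Fin.sum_univ_three]) fun s i hi => by
      fin_cases s <;> simp_all [Z, mem_agreement, Matrix.mulVec_sub]
  exact hxy (sub_eq_zero.1 (congrFun hu 0))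

end IsStronglyHashing

section Transversals

open scoped Matrix

variable {ι R : Type*} [Fintype ι] [DecidableEq ι] {k : ℕ} [CommRing R] [Fintype R] [DecidableEq R]

/-- The `ι`-partite hypergraph whose edges are the codewords of the linear code generated by the
columns of `G`. -/
def codeHypergraph (G : Matrix ι (Fin k) R) : Finset (Finset (ι × R)) :=
  univ.image fun x => graphEdge (G *ᵥ x)

variable {G : Matrix ι (Fin k) R} (hG : IsStronglyHashing G)
include hG

theorem IsStronglyHashing.isSparse_codeHypergraph (hk : k ≤ Fintype.card ι) :
    IsSparse (Fintype.card ι) k (codeHypergraph G) where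
  card_eq := by simp [codeHypergraph, card_graphEdge]
  card_inter := by
    simp only [codeHypergraph, mem_image, mem_univ, true_and]
    rintro _ ⟨x, rfl⟩ _ ⟨y, rfl⟩ hxy
    rw [card_graphEdge_inter_graphEdge]
    exact Nat.le_sub_one_of_lt (hG.card_agreement_lt (ne_of_apply_ne (graphEdge <| G *ᵥ ·) hxy))
  card_union := by
    simp only [codeHypergraph, mem_image, mem_univ, true_and]
    rintro _ ⟨x, rfl⟩ _ ⟨y, rfl⟩ _ ⟨z, rfl⟩ hxy hxz hyz
    have hagree := hG.card_agreement_add_lt (ne_of_apply_ne (graphEdge <| G *ᵥ ·) hxy)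
      (ne_of_apply_ne (graphEdge <| G *ᵥ ·) hxz) (ne_of_apply_ne (graphEdge <| G *ᵥ ·) hyz)
    have hcard := card_union_three (graphEdge (G *ᵥ x)) (graphEdge (G *ᵥ y)) (graphEdge (G *ᵥ z))
    simp only [card_graphEdge_inter_graphEdge_inter_graphEdge, card_graphEdge_inter_graphEdge,
      card_graphEdge] at hcard
    omega

theorem IsStronglyHashing.card_codeHypergraph (hk : k ≤ Fintype.card ι) :
    #(codeHypergraph G) = Fintype.card R ^ k := by
  rw [codeHypergraph, card_image_of_injective, card_univ, Fintype.card_fun, Fintype.card_fin]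
  intro x y (hxy : graphEdge (G *ᵥ x) = graphEdge (G *ᵥ y))
  by_contra hne
  have hlt := hG.card_agreement_lt hne
  rw [← card_graphEdge_inter_graphEdge, hxy, inter_self, card_graphEdge] at hlt
  omega

theorem IsStronglyHashing.exists_isSparse_glue (hk : 2 ≤ k) (hkι : k ≤ Fintype.card ι)
    {H : Finset (Finset R)} (hH : IsSparse (Fintype.card ι) k H) :
    ∃ H' : Finset (Finset (ι × R)), IsSparse (Fintype.card ι) k H' ∧
      #H' = Fintype.card R ^ k + Fintype.card ι * #H := by
  let F : Option ι → Finset (Finset (ι × R)) := fun o =>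
    o.elim (codeHypergraph G) fun i =>
      H.map (mapEmbedding (Function.Embedding.sectR i R)).toEmbedding
  have hF : ∀ o, IsSparse (Fintype.card ι) k (F o)
    | none => hG.isSparse_codeHypergraph hkι
    | some i => hH.map _
  have hdisj : ∀ o o', o ≠ o' → ∀ A ∈ F o, ∀ B ∈ F o', #(A ∩ B) ≤ 1 := by
    rintro (_ | i) (_ | j) hij <;>
      simp only [F, codeHypergraph, Option.elim, forall_mem_map, forall_mem_image]
    · exact absurd rfl hij
    · exact fun x _ A _ => card_graphEdge_inter_map_sectR_le _ _ _
    · intro A _ x _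
      rw [inter_comm]
      exact card_graphEdge_inter_map_sectR_le _ _ _
    · exact fun A _ B _ => by simp [map_sectR_inter_map_sectR_eq_empty (by simpa using hij)]
  refine ⟨univ.biUnion F, .biUnion hF hdisj hk hkι, ?_⟩
  rw [IsSparse.card_biUnion hF hdisj (hk.trans hkι), Fintype.sum_option]
  simp [F, hG.card_codeHypergraph hkι]

end Transversals

theorem exists_forall_coprime_pow_add_mul_maxSparseCard_le {r k : ℕ} (hk : 2 ≤ k) (hkr : k ≤ r) :
    ∃ D : ℕ, 0 < D ∧ ∀ m n : ℕ, 0 < m → m.Coprime D → r * m ≤ n →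
      m ^ k + r * maxSparseCard r k m ≤ maxSparseCard r k n := by
  obtain ⟨G, D, hD, hG⟩ := exists_isStronglyHashing (Fin r) k
  refine ⟨D, hD, fun m n hm hmD hmn => ?_⟩
  have : NeZero m := ⟨hm.ne'⟩
  obtain ⟨H, hH, hHcard⟩ := exists_isSparse_card_eq_maxSparseCard r k m
  let φ : Fin m ≃ ZMod m := Fintype.equivOfCardEq (by simp)
  have hGm := hG (ZMod m) ((ZMod.isUnit_iff_coprime D m).2 hmD.symm)
  obtain ⟨H', hH', hcard⟩ := hGm.exists_isSparse_glue hk (by simpa)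
    (H := H.map (mapEmbedding φ.toEmbedding).toEmbedding) (by simpa using hH.map _)
  simp only [Fintype.card_fin] at hH'
  have := hH'.card_le_maxSparseCard (n := n) (by simpa using hmn)
  simpa [hcard, hHcard] using this

theorem exists_coprime_le_lt_add {D : ℕ} (hD : 0 < D) {q : ℕ} (hq : 0 < q) :
    ∃ m, 0 < m ∧ m.Coprime D ∧ m ≤ q ∧ q < m + D := by
  refine ⟨D * ((q - 1) / D) + 1, by omega, by simp, ?_, ?_⟩
  · have := Nat.mul_div_le (q - 1) D
    omega
  · have := Nat.lt_mul_div_succ (q - 1) hD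
    rw [mul_add] at this
    omega

theorem exists_forall_pow_add_mul_maxSparseCard_le {r k : ℕ} (hk : 2 ≤ k) (hkr : k ≤ r) :
    ∃ K : ℕ, ∀ n, r ≤ n → ∃ m, r * m ≤ n ∧ n ≤ r * m + K ∧
      m ^ k + r * maxSparseCard r k m ≤ maxSparseCard r k n := by
  obtain ⟨D, hD, hrec⟩ := exists_forall_coprime_pow_add_mul_maxSparseCard_le hk hkr
  refine ⟨r * D, fun n hn => ?_⟩
  have hr : 0 < r := by omega
  obtain ⟨m, hm, hmD, hmq, hqm⟩ := exists_coprime_le_lt_add hD (Nat.div_pos hn hr)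
  have hrm : r * m ≤ n := (Nat.mul_le_mul_left r hmq).trans (Nat.mul_div_le n r)
  refine ⟨m, hrm, ?_, hrec m n hm hmD hrm⟩
  calc n ≤ r * (n / r + 1) := (Nat.lt_mul_div_succ n hr).le
    _ ≤ r * (m + D) := Nat.mul_le_mul_left r hqm
    _ = r * m + r * D := mul_add ..

/-! ### Solving the recursion -/

section Recursion

variable {r k : ℕ} {s : ℝ}

theorem pow_sub_self_pos (hr : 2 ≤ r) (hk : 2 ≤ k) : 0 < (r : ℝ) ^ k - r := by
  rw [sub_pos]
  exact_mod_cast lt_self_pow₀ (by omega : 1 < r) (by omega : 1 < k)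

theorem pow_sub_pow_le_mul {x y K : ℝ} (hy : 0 ≤ y) (hyx : y ≤ x) (hxy : x ≤ y + K) :
    x ^ k - y ^ k ≤ k * K * x ^ (k - 1) := by
  have hx := hy.trans hyx
  calc x ^ k - y ^ k ≤ |x - y| * k * max |x| |y| ^ (k - 1) :=
        (le_abs_self _).trans (abs_pow_sub_pow_le x y k)
    _ = (x - y) * k * x ^ (k - 1) := by
        rw [abs_of_nonneg (sub_nonneg.2 hyx), abs_of_nonneg hx, abs_of_nonneg hy, max_eq_left hyx]
    _ ≤ K * k * x ^ (k - 1) := by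
        gcongr
        linarith
    _ = k * K * x ^ (k - 1) := by ring

theorem pow_sub_one_le_rpow (hk : 1 ≤ k) (hsk : (k : ℝ) - 1 ≤ s) {x : ℝ} (hx : 1 ≤ x) :
    x ^ (k - 1) ≤ x ^ s := by
  rw [← Real.rpow_natCast]
  exact Real.rpow_le_rpow_of_exponent_le hx (by push_cast [hk]; exact hsk)

theorem mul_rpow_le_rpow_mul {c x y : ℝ} (hc : 0 < c) (hs : 0 ≤ s) (hy : 0 ≤ y) (hyx : c * y ≤ x) :
    c * y ^ s ≤ c ^ (1 - s) * x ^ s :=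
  calc c * y ^ s = c ^ (1 - s) * (c * y) ^ s := by
        rw [Real.mul_rpow hc.le hy, ← mul_assoc, ← Real.rpow_add hc, sub_add_cancel, Real.rpow_one]
    _ ≤ c ^ (1 - s) * x ^ s := by gcongr

theorem pow_div_sub_rpow_le_pow_add_mul {r x y a K : ℝ} (hr : 0 < r) (hc : 0 < r ^ k - r)
    (hk : 1 ≤ k) (hs : 0 ≤ s) (hsk : (k : ℝ) - 1 ≤ s) (ha : 0 ≤ a)
    (haK : k * K / (r ^ k - r) ≤ a * (1 - r ^ (1 - s))) (hx : 1 ≤ x) (hy : 0 ≤ y)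
    (hyx : r * y ≤ x) (hxy : x ≤ r * y + K) :
    x ^ k / (r ^ k - r) - a * x ^ s ≤ y ^ k + r * (y ^ k / (r ^ k - r) - a * y ^ s) := by
  set c : ℝ := r ^ k - r with hc_def
  have hK : 0 ≤ K := by linarith
  have hpow := pow_sub_pow_le_mul (k := k) (by positivity) hyx hxy
  have hxs := pow_sub_one_le_rpow hk hsk hx
  have hrpow := mul_rpow_le_rpow_mul hr hs hy hyx
  calc x ^ k / c - a * x ^ s
      = (x ^ k - (r * y) ^ k) / c + (r * y) ^ k / c - a * x ^ s := by ring
    _ ≤ k * K * x ^ (k - 1) / c + (r * y) ^ k / c - a * x ^ s := by gcongr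
    _ = k * K / c * x ^ (k - 1) + (r * y) ^ k / c - a * x ^ s := by ring
    _ ≤ k * K / c * x ^ s + (r * y) ^ k / c - a * x ^ s := by gcongr
    _ ≤ a * (1 - r ^ (1 - s)) * x ^ s + (r * y) ^ k / c - a * x ^ s := by gcongr
    _ = (r * y) ^ k / c - a * (r ^ (1 - s) * x ^ s) := by ring
    _ ≤ (r * y) ^ k / c - a * (r * y ^ s) := by gcongr
    _ = y ^ k + r * (y ^ k / c - a * y ^ s) := by
      rw [mul_pow, ← sub_add_cancel (r ^ k) r, ← hc_def]
      field_simp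
      ring

theorem exists_le_of_recursion (hr : 2 ≤ r) (hk : 2 ≤ k) {g : ℕ → ℝ} (hg : ∀ n, 0 ≤ g n) {K : ℝ}
    (hrec : ∀ n, r ≤ n → ∃ m : ℕ, r * m ≤ n ∧ (n : ℝ) ≤ r * m + K ∧
      (m : ℝ) ^ k + r * g m ≤ g n) (hs : 1 < s) (hsk : (k : ℝ) - 1 ≤ s) :
    ∃ a, ∀ n : ℕ, (n : ℝ) ^ k / ((r : ℝ) ^ k - r) - a * (n : ℝ) ^ s ≤ g n := by
  have hc := pow_sub_self_pos hr hk
  have hρ : (r : ℝ) ^ (1 - s) < 1 :=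
    Real.rpow_lt_one_of_one_lt_of_neg (by exact_mod_cast hr) (by linarith)
  obtain ⟨a, haK, har⟩ : ∃ a : ℝ,
      k * K / ((r : ℝ) ^ k - r) ≤ a * (1 - (r : ℝ) ^ (1 - s)) ∧ r / ((r : ℝ) ^ k - r) ≤ a :=
    ⟨max (k * K / ((r : ℝ) ^ k - r) / (1 - (r : ℝ) ^ (1 - s))) (r / ((r : ℝ) ^ k - r)),
      (div_le_iff₀ (sub_pos.2 hρ)).1 (le_max_left _ _), le_max_right _ _⟩
  have ha : 0 ≤ a := le_trans (by positivity) har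
  refine ⟨a, fun n => ?_⟩
  induction n using Nat.strong_induction_on with
  | _ n ih =>
  rcases n.eq_zero_or_pos with rfl | hn
  · simpa [zero_pow (by omega : k ≠ 0), Real.zero_rpow (by linarith : s ≠ 0)] using hg 0
  have hn1 : (1 : ℝ) ≤ n := Nat.one_le_cast.2 hn
  rcases lt_or_ge n r with hnr | hnr
  · have hns := pow_sub_one_le_rpow (by omega) hsk hn1
    have : (n : ℝ) ^ k / ((r : ℝ) ^ k - r) ≤ a * (n : ℝ) ^ s :=
      calc (n : ℝ) ^ k / ((r : ℝ) ^ k - r) = n / ((r : ℝ) ^ k - r) * (n : ℝ) ^ (k - 1) := by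
            rw [← pow_sub_one_mul (by omega : k ≠ 0)]
            ring
        _ ≤ r / ((r : ℝ) ^ k - r) * (n : ℝ) ^ s := by gcongr
        _ ≤ a * (n : ℝ) ^ s := by gcongr
    linarith [hg n]
  · obtain ⟨m, hmn, hnm, hstep⟩ := hrec n hnr
    have hm := ih m (by nlinarith)
    refine le_trans (pow_div_sub_rpow_le_pow_add_mul (by positivity) hc (by omega) (by linarith)
      hsk ha haK hn1 m.cast_nonneg (by exact_mod_cast hmn) hnm) (le_trans ?_ hstep)
    gcongr

end Recursion

theorem le_liminf_div_pow {k : ℕ} {f : ℕ → ℝ} {L a s C : ℝ} (hs : s < k)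
    (hlower : ∀ n : ℕ, L * (n : ℝ) ^ k - a * (n : ℝ) ^ s ≤ f n)
    (hupper : ∀ n : ℕ, f n ≤ C * (n : ℝ) ^ k) :
    L ≤ liminf (fun n : ℕ => f n / (n : ℝ) ^ k) atTop := by
  have hlim : Tendsto (fun n : ℕ => L - a * (n : ℝ) ^ (-(k - s))) atTop (nhds L) := by
    have h := (tendsto_rpow_neg_atTop (sub_pos.2 hs)).comp tendsto_natCast_atTop_atTop
    simpa using (h.const_mul a).const_sub L
  rw [← hlim.liminf_eq]
  refine liminf_le_liminf ?_ hlim.isBoundedUnder_ge (IsBoundedUnder.isCoboundedUnder_ge ⟨C, ?_⟩)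
  · filter_upwards [eventually_gt_atTop 0] with n hn
    have hn : (0 : ℝ) < n := Nat.cast_pos.2 hn
    rw [le_div_iff₀ (by positivity), sub_mul, mul_assoc, ← Real.rpow_natCast, ← Real.rpow_add hn,
      neg_sub, sub_add_cancel, Real.rpow_natCast]
    exact hlower n
  · rw [eventually_map]
    filter_upwards [eventually_gt_atTop 0] with n hn
    rw [div_le_iff₀ (by positivity)]
    exact hupper n

theorem exists_le_maxSparseCard {r k : ℕ} (hk : 2 ≤ k) (hkr : k ≤ r) {s : ℝ} (hs : 1 < s)
    (hsk : (k : ℝ) - 1 ≤ s) :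
    ∃ a : ℝ, ∀ n : ℕ,
      (n : ℝ) ^ k / ((r : ℝ) ^ k - r) - a * (n : ℝ) ^ s ≤ maxSparseCard r k n := by
  obtain ⟨K, hrec⟩ := exists_forall_pow_add_mul_maxSparseCard_le hk hkr
  refine exists_le_of_recursion (hk.trans hkr) hk (g := fun n => maxSparseCard r k n) (K := K)
    (fun n => Nat.cast_nonneg _) (fun n hn => ?_) hs hsk
  obtain ⟨m, hmn, hnm, hstep⟩ := hrec n hn
  exact ⟨m, hmn, by exact_mod_cast hnm, by exact_mod_cast hstep⟩

theorem liminf_lower_bound_general {r k : ℕ} (hk : 2 ≤ k) (hkr : k ≤ r) :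
    (1 / ((r : ℝ) ^ k - r) ≤
      liminf (fun n : ℕ =>
        (sparseTuranNumber n r (3 * r - 2 * k) 3 : ℝ) / n ^ k) atTop) ∧
    ∀ s : ℝ, 1 < s → (k : ℝ) - 1 ≤ s → ∃ a : ℝ, ∀ n : ℕ, ∃ H : Finset (Finset (Fin n)),
      IsSparse r k H ∧ (n : ℝ) ^ k / ((r : ℝ) ^ k - r) - a * (n : ℝ) ^ s ≤ #H := by
  have hmain (s : ℝ) (hs : 1 < s) (hsk : (k : ℝ) - 1 ≤ s) : ∃ a : ℝ, ∀ n : ℕ,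
      ∃ H : Finset (Finset (Fin n)), IsSparse r k H ∧
        (n : ℝ) ^ k / ((r : ℝ) ^ k - r) - a * (n : ℝ) ^ s ≤ #H := by
    obtain ⟨a, ha⟩ := exists_le_maxSparseCard hk hkr hs hsk
    refine ⟨a, fun n => ?_⟩
    obtain ⟨H, hH, hcard⟩ := exists_isSparse_card_eq_maxSparseCard r k n
    exact ⟨H, hH, hcard ▸ ha n⟩
  refine ⟨?_, hmain⟩
  have hk' : (2 : ℝ) ≤ k := Nat.ofNat_le_cast.2 hk
  obtain ⟨a, ha⟩ := hmain (k - 1 / 2) (by linarith) (by linarith)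
  refine le_liminf_div_pow (a := a) (s := k - 1 / 2) (C := 2) (by linarith) (fun n => ?_)
    fun n => ?_
  · obtain ⟨H, hH, hcard⟩ := ha n
    rw [one_div_mul_eq_div]
    exact hcard.trans (Nat.cast_le.2 hH.card_le_sparseTuranNumber)
  · have := (sparseTuranNumber_le (n := n) (v := 3 * r - 2 * k) (e := 3) hkr (by omega)).trans
      (Nat.mul_le_mul_right 2 (Nat.choose_le_pow n k))
    rw [mul_comm (2 : ℝ)]
    exact_mod_cast this

/-- For fixed r > k ≥ 2, liminf f_r(n,3r-2k,3)/n^k ≥ 1/(r^k - r); more precisely,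
there are constants a and δ ≤ 0.525 such that for every n ≥ 1 there is a
G_r(3r-2k,3)-free r-graph on n vertices, with pairwise edge intersections of size
at most k-1, having at least n^k/(r^k-r) - a·n^{k-1+δ} edges. -/
theorem liminf_lower_bound (r k : ℕ) (hk : 2 ≤ k) (hrk : k < r) :
    (1 / ((r : ℝ) ^ k - r) ≤
      liminf (fun n : ℕ =>
        (sparseTuranNumber n r (3 * r - 2 * k) 3 : ℝ) / n ^ k) atTop) ∧
    ∃ a : ℝ, ∃ δ : ℝ, 0 < δ ∧ δ ≤ 0.525 ∧
      ∀ n : ℕ, 1 ≤ n → ∃ H : Finset (Finset (Fin n)),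
        (∀ A ∈ H, A.card = r) ∧
        (∀ A ∈ H, ∀ B ∈ H, ∀ C ∈ H, A ≠ B → A ≠ C → B ≠ C →
          3 * r - 2 * k + 1 ≤ (A ∪ B ∪ C).card) ∧
        (∀ A ∈ H, ∀ B ∈ H, A ≠ B → (A ∩ B).card ≤ k - 1) ∧
        (n : ℝ) ^ k / ((r : ℝ) ^ k - r) - a * (n : ℝ) ^ ((k : ℝ) - 1 + δ) ≤
          H.card := by
  obtain ⟨hliminf, hH⟩ := liminf_lower_bound_general hk hrk.le
  have hk' : (2 : ℝ) ≤ k := Nat.ofNat_le_cast.2 hk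
  obtain ⟨a, ha⟩ := hH (k - 1 + 1 / 2) (by linarith) (by linarith)
  refine ⟨hliminf, a, 1 / 2, by norm_num, by norm_num, fun n _ => ?_⟩
  obtain ⟨H, hH, hcard⟩ := ha n
  exact ⟨H, hH.card_eq, hH.card_union, hH.card_inter, hcard⟩
end

section
/- For every fixed r ≥ 3, lim_{n→∞} f_r(n, 3r-4, 3)/n^2 = 1/(r^2 - r - 1). -/
open Finset Filter

/-! For the upper bound, count incidences between pairs of vertices and edges. Three edges
through a common pair span too few vertices, so every pair has codegree at most two, and an edge
has at most one pair of codegree two, unless it shares three vertices with another edge, which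
happens for `O(n)` edges only. Hence `2 * (r.choose 2) * |H| ≤ n ^ 2 + |H| + O(n)`.

The count is tight for copies of two edges sharing exactly one pair: such a copy has two edges and
covers `r ^ 2 - r - 1` pairs. For the lower bound we therefore pack copies of this hypergraph so
that no pair covered by an edge of one copy lies in another copy, while almost all pairs are
covered. The copies live in a power `R` of a finite field and are the affine images `a * p σ + b`
of configurations `p σ : V → R`, where `a` is a unit of color `1` for a product of quadratic
characters. The difference of two points in a copy then has the color of the corresponding
difference in `p σ`. The `p σ` are chosen so that all covered pairs, over all `σ`, have distinct
colors. A covered pair thus determines `σ` and its preimage in `V`, hence also `a` up to sign and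
`b`, and a fraction close to one of all colors is used. Finally a blow-up turns this packing, for
one fixed `R`, into packings for all large `n`. -/

open scoped Topology

section Sparse

variable {V W : Type*} [DecidableEq V] [DecidableEq W] {n r v e : ℕ} {H : Finset (Finset V)}

/-- The hypergraphs on an arbitrary vertex type over which `sparseTuranNumber n r v e` maximises:
all edges have size `r`, and any `e` of them span more than `v` vertices. -/
structure IsSparse_s14 (r v e : ℕ) (H : Finset (Finset V)) : Prop where
  sized : (H : Set (Finset V)).Sized r
  lt_card_sup : ∀ S ⊆ H, #S = e → v < #(S.sup id)

theorem IsSparse_s14.map (hH : IsSparse_s14 r v e H) (f : V ↪ W) :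
    IsSparse_s14 r v e (H.map (mapEmbedding f).toEmbedding) where
  sized A hA := by
    obtain ⟨B, hB, rfl⟩ := Finset.mem_map.1 hA
    exact (card_map f).trans (hH.sized hB)
  lt_card_sup S hS hSe := by
    obtain ⟨S, hSH, rfl⟩ := subset_map_iff.1 hS
    have hsup : (S.map (mapEmbedding f).toEmbedding).sup id = (S.sup id).map f := by
      ext x
      simp only [Finset.mem_sup, Finset.mem_map]
      aesop
    rw [hsup, card_map]
    exact hH.lt_card_sup S hSH ((card_map _).symm.trans hSe)

theorem exists_isSparse_card_eq_sparseTuranNumber (n r v : ℕ) (he : e ≠ 0) :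
    ∃ H : Finset (Finset (Fin n)), IsSparse_s14 r v e H ∧ #H = sparseTuranNumber n r v e := by
  obtain ⟨H, hsized, hspan, hcard⟩ := Nat.sSup_mem
    (s := {m | ∃ H : Finset (Finset (Fin n)), (∀ A ∈ H, #A = r) ∧
      (∀ S ⊆ H, #S = e → v + 1 ≤ #(S.sup id)) ∧ #H = m})
    ⟨0, ∅, by simp, fun S hS hSe => absurd hSe (by simp [subset_empty.1 hS, he.symm]), rfl⟩
    ⟨Fintype.card (Finset (Fin n)), by rintro m ⟨H, -, -, rfl⟩; exact card_le_univ H⟩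
  exact ⟨H, ⟨fun A hA => hsized A hA, hspan⟩, hcard⟩

theorem IsSparse_s14.card_le_sparseTuranNumber [Fintype V] (hH : IsSparse_s14 r v e H)
    (hn : Fintype.card V ≤ n) : #H ≤ sparseTuranNumber n r v e := by
  obtain ⟨f⟩ : Nonempty (V ↪ Fin n) :=
    Function.Embedding.nonempty_of_card_le (by rwa [Fintype.card_fin])
  have hHf := hH.map f
  refine le_csSup ⟨Fintype.card (Finset (Fin n)), ?_⟩
    ⟨_, fun A hA => hHf.sized hA, hHf.lt_card_sup, card_map _⟩
  rintro m ⟨K, -, -, rfl⟩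
  exact card_le_univ K

end Sparse

section UpperBound

variable {V : Type*} [DecidableEq V] {r : ℕ} {H : Finset (Finset V)} {A B C T : Finset V}

theorem IsSparse_s14.card_inter_add_card_inter_union_le (hH : IsSparse_s14 r (3 * r - 4) 3 H)
    (hA : A ∈ H) (hB : B ∈ H) (hC : C ∈ H) (hAB : A ≠ B) (hAC : A ≠ C) (hBC : B ≠ C) :
    #(A ∩ B) + #(C ∩ (A ∪ B)) ≤ 3 := by
  have hspan := hH.lt_card_sup {A, B, C} (by simp [insert_subset_iff, *])
    (card_eq_three.2 ⟨A, B, C, hAB, hAC, hBC, rfl⟩)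
  have hsup : ({A, B, C} : Finset (Finset V)).sup id = C ∪ (A ∪ B) := by
    simp [union_comm, union_left_comm]
  have hunion := card_union_add_card_inter A B
  have hunion' := card_union_add_card_inter C (A ∪ B)
  have := hH.sized hA
  have := hH.sized hB
  have := hH.sized hC
  rw [hsup] at hspan
  omega

/-- The codegree of a set of vertices: the number of edges containing it. -/
def codegree (H : Finset (Finset V)) (T : Finset V) : ℕ := #{A ∈ H | T ⊆ A}

theorem IsSparse_s14.codegree_le_two (hH : IsSparse_s14 r (3 * r - 4) 3 H) (hT : #T = 2) :
    codegree H T ≤ 2 := by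
  by_contra! h
  obtain ⟨A, B, C, hA, hB, hC, hAB, hAC, hBC⟩ := two_lt_card_iff.1 h
  rw [mem_filter] at hA hB hC
  have hle := hH.card_inter_add_card_inter_union_le hA.1 hB.1 hC.1 hAB hAC hBC
  have hTAB : #T ≤ #(A ∩ B) := card_le_card (subset_inter hA.2 hB.2)
  have hTC : #T ≤ #(C ∩ (A ∪ B)) :=
    card_le_card (subset_inter hC.2 (hA.2.trans subset_union_left))
  omega

theorem exists_mem_ne_of_one_lt_codegree (hT : 1 < codegree H T) (A : Finset V) :
    ∃ B ∈ H, A ≠ B ∧ T ⊆ B := by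
  obtain ⟨B, hB, hBA⟩ := exists_mem_ne hT A
  exact ⟨B, (mem_filter.1 hB).1, hBA.symm, (mem_filter.1 hB).2⟩

theorem sum_codegree_powersetCard [Fintype V] (H : Finset (Finset V)) (k : ℕ)
    (p : Finset V → Prop) [DecidablePred p] :
    ∑ T ∈ powersetCard k univ with p T, codegree H T = ∑ A ∈ H, #{T ∈ powersetCard k A | p T} := by
  have hdouble := sum_card_bipartiteAbove_eq_sum_card_bipartiteBelow
    (s := {T ∈ powersetCard k (univ : Finset V) | p T}) (t := H) (· ⊆ ·)
  refine hdouble.trans (sum_congr rfl fun A _ => congrArg card ?_)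
  ext T
  simp only [mem_bipartiteBelow, mem_filter, mem_powersetCard, subset_univ, true_and]
  tauto

/-- The edges meeting another edge in at least three vertices. In the sparse hypergraphs considered
here they are the only edges with more than one pair of codegree two. -/
def overlappingEdges (H : Finset (Finset V)) : Finset (Finset V) :=
  {A ∈ H | ∃ B ∈ H, A ≠ B ∧ 3 ≤ #(A ∩ B)}

theorem mem_overlappingEdges :
    A ∈ overlappingEdges H ↔ A ∈ H ∧ ∃ B ∈ H, A ≠ B ∧ 3 ≤ #(A ∩ B) :=
  mem_filter

theorem overlappingEdges_subset (H : Finset (Finset V)) : overlappingEdges H ⊆ H :=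
  filter_subset _ H

theorem IsSparse_s14.card_mul_card_overlappingEdges_le [Fintype V]
    (hH : IsSparse_s14 r (3 * r - 4) 3 H) : r * #(overlappingEdges H) ≤ 2 * Fintype.card V := by
  have hdegree : ∀ x, #{A ∈ overlappingEdges H | x ∈ A} ≤ 2 := by
    intro x
    by_contra! h
    obtain ⟨A, B, C, hA, hB, hC, hAB, hAC, hBC⟩ := two_lt_card_iff.1 h
    rw [mem_filter, mem_overlappingEdges] at hA hB hC
    obtain ⟨⟨hAH, A', hA', hAA', hinter⟩, hxA⟩ := hA
    have eq_of_mem : ∀ D ∈ H, x ∈ D → A ≠ D → A' = D := by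
      intro D hD hxD hAD
      by_contra hA'D
      have hle := hH.card_inter_add_card_inter_union_le hAH hA' hD hAA' hAD hA'D
      have hpos : 0 < #(D ∩ (A ∪ A')) := card_pos.2 ⟨x, by simp [hxD, hxA]⟩
      omega
    exact hBC ((eq_of_mem B hB.1.1 hB.2 hAB).symm.trans (eq_of_mem C hC.1.1 hC.2 hAC))
  calc r * #(overlappingEdges H) = ∑ A ∈ overlappingEdges H, #A := by
        rw [sum_const_nat fun A hA => hH.sized (overlappingEdges_subset H hA), mul_comm]
    _ ≤ Fintype.card V * 2 := sum_card_le hdegree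
    _ = 2 * Fintype.card V := mul_comm _ _

theorem IsSparse_s14.filter_one_lt_codegree_subset (hH : IsSparse_s14 r (3 * r - 4) 3 H)
    (hA : A ∈ H) (hB : B ∈ H) (hAB : A ≠ B) (hinter : 2 ≤ #(A ∩ B)) :
    {T ∈ powersetCard 2 A | 1 < codegree H T} ⊆ powersetCard 2 (A ∩ B) := by
  intro T hT
  simp only [mem_filter, mem_powersetCard] at hT ⊢
  obtain ⟨⟨hTA, hT⟩, hdeg⟩ := hT
  obtain ⟨C, hC, hAC, hTC⟩ := exists_mem_ne_of_one_lt_codegree hdeg A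
  refine ⟨subset_inter hTA ?_, hT⟩
  by_contra hTB
  have hle := hH.card_inter_add_card_inter_union_le hA hB hC hAB hAC (by rintro rfl; exact hTB hTC)
  have : #T ≤ #(C ∩ (A ∪ B)) := card_le_card (subset_inter hTC (hTA.trans subset_union_left))
  omega

theorem IsSparse_s14.card_inter_le_three (hH : IsSparse_s14 r (3 * r - 4) 3 H) (hcard : 3 ≤ #H)
    (hA : A ∈ H) (hB : B ∈ H) (hAB : A ≠ B) : #(A ∩ B) ≤ 3 := by
  obtain ⟨C, hC, hCAB⟩ : ∃ C ∈ H, C ∉ ({A, B} : Finset (Finset V)) :=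
    exists_mem_notMem_of_card_lt_card (card_le_two.trans_lt hcard)
  simp only [mem_insert, mem_singleton, not_or] at hCAB
  have := hH.card_inter_add_card_inter_union_le hA hB hC hAB (Ne.symm hCAB.1) (Ne.symm hCAB.2)
  omega

theorem IsSparse_s14.card_filter_one_lt_codegree_le (hH : IsSparse_s14 r (3 * r - 4) 3 H)
    (hcard : 3 ≤ #H) (hA : A ∈ H) :
    #{T ∈ powersetCard 2 A | 1 < codegree H T} ≤
      1 + 2 * if A ∈ overlappingEdges H then 1 else 0 := by
  obtain hempty | ⟨T, hT⟩ := {T ∈ powersetCard 2 A | 1 < codegree H T}.eq_empty_or_nonempty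
  · simp [hempty]
  obtain ⟨⟨hTA, hT⟩, hdeg⟩ := (mem_filter.1 hT).imp mem_powersetCard.1 id
  obtain ⟨B, hB, hAB, hTB⟩ := exists_mem_ne_of_one_lt_codegree hdeg A
  have htwo : 2 ≤ #(A ∩ B) := hT ▸ card_le_card (subset_inter hTA hTB)
  have hle := card_le_card (hH.filter_one_lt_codegree_subset hA hB hAB htwo)
  rw [card_powersetCard] at hle
  have hthree := hH.card_inter_le_three hcard hA hB hAB
  obtain h | h : #(A ∩ B) = 2 ∨ #(A ∩ B) = 3 := by omega
  · rw [h, Nat.choose_self] at hle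
    omega
  · rw [if_pos (mem_overlappingEdges.2 ⟨hA, B, hB, hAB, h.ge⟩)]
    simpa [h] using hle

theorem IsSparse_s14.two_mul_choose_two_mul_card_le [Fintype V] (hH : IsSparse_s14 r (3 * r - 4) 3 H)
    (hcard : 3 ≤ #H) :
    2 * (#H * r.choose 2) ≤
      2 * (Fintype.card V).choose 2 + (#H + 2 * #(overlappingEdges H)) := by
  set P : Finset (Finset V) := powersetCard 2 univ with hP
  have hsum : ∑ T ∈ P, codegree H T = #H * r.choose 2 := by
    have := sum_codegree_powersetCard H 2 fun _ => True
    simp only [filter_true, card_powersetCard] at this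
    exact this.trans (sum_const_nat fun A hA => by rw [hH.sized hA])
  have hheavy : ∑ T ∈ P with 1 < codegree H T, codegree H T ≤ #H + 2 * #(overlappingEdges H) := by
    rw [sum_codegree_powersetCard]
    refine (sum_le_sum fun A hA => hH.card_filter_one_lt_codegree_le hcard hA).trans_eq ?_
    rw [sum_add_distrib, ← mul_sum, sum_boole, filter_mem_eq_inter,
      inter_eq_right.2 (overlappingEdges_subset H), sum_const, smul_eq_mul, mul_one, Nat.cast_id]
  calc 2 * (#H * r.choose 2) = ∑ T ∈ P, 2 * codegree H T := by rw [← hsum, mul_sum]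
    _ ≤ ∑ T ∈ P, (2 + if 1 < codegree H T then codegree H T else 0) := by
        refine sum_le_sum fun T hT => ?_
        have := hH.codegree_le_two (mem_powersetCard.1 hT).2
        split_ifs <;> omega
    _ = 2 * (Fintype.card V).choose 2 + ∑ T ∈ P with 1 < codegree H T, codegree H T := by
        rw [sum_add_distrib, sum_const, smul_eq_mul, mul_comm, hP, card_powersetCard, card_univ,
          sum_filter]
    _ ≤ _ := by gcongr

theorem IsSparse_s14.mul_card_le [Fintype V] (hr : 2 ≤ r) (hH : IsSparse_s14 r (3 * r - 4) 3 H)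
    (hcard : 3 ≤ #H) :
    ((r : ℝ) ^ 2 - r - 1) * #H ≤ (Fintype.card V : ℝ) ^ 2 + 2 * Fintype.card V := by
  have hcount : (2 * (#H * (r.choose 2 : ℝ))) ≤
      2 * (Fintype.card V).choose 2 + (#H + 2 * #(overlappingEdges H)) :=
    mod_cast hH.two_mul_choose_two_mul_card_le hcard
  have hoverlap : (#(overlappingEdges H) : ℝ) ≤ Fintype.card V := by
    have := hH.card_mul_card_overlappingEdges_le
    exact_mod_cast (by nlinarith : #(overlappingEdges H) ≤ Fintype.card V)
  rw [Nat.cast_choose_two, Nat.cast_choose_two] at hcount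
  linarith [(Fintype.card V).cast_nonneg (α := ℝ)]

theorem mul_sparseTuranNumber_le (n : ℕ) {r : ℕ} (hr : 2 ≤ r) :
    ((r : ℝ) ^ 2 - r - 1) * sparseTuranNumber n r (3 * r - 4) 3 ≤
      (n : ℝ) ^ 2 + 2 * n + 2 * ((r : ℝ) ^ 2 - r - 1) := by
  obtain ⟨H, hH, hcard⟩ :=
    exists_isSparse_card_eq_sparseTuranNumber n r (3 * r - 4) (e := 3) (by norm_num)
  have hr' : (2 : ℝ) ≤ r := mod_cast hr
  have hpos : 0 ≤ (r : ℝ) ^ 2 - r - 1 := by nlinarith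
  rw [← hcard]
  obtain h | h := le_or_gt 3 #H
  · have := hH.mul_card_le hr h
    rw [Fintype.card_fin] at this
    linarith
  · have : (#H : ℝ) ≤ 2 := mod_cast Nat.lt_succ_iff.1 h
    nlinarith

theorem eventually_sparseTuranNumber_div_sq_lt {r : ℕ} (hr : 2 ≤ r) {a : ℝ}
    (ha : 1 / ((r : ℝ) ^ 2 - r - 1) < a) :
    ∀ᶠ n : ℕ in atTop, (sparseTuranNumber n r (3 * r - 4) 3 : ℝ) / n ^ 2 < a := by
  have hr' : (2 : ℝ) ≤ r := mod_cast hr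
  set E : ℝ := (r : ℝ) ^ 2 - r - 1
  have hEpos : 0 < E := by nlinarith
  have hinv : Tendsto (fun n : ℕ => (1 : ℝ) / n) atTop (𝓝 0) := tendsto_one_div_atTop_nhds_zero_nat
  have hlim : Tendsto (fun n : ℕ => (1 + 2 * (1 / (n : ℝ)) + 2 * E * (1 / (n : ℝ)) ^ 2) / E) atTop
      (𝓝 (1 / E)) := by
    simpa using (((hinv.const_mul 2).const_add 1).add ((hinv.pow 2).const_mul (2 * E))).div_const E
  filter_upwards [hlim.eventually_lt_const ha, eventually_gt_atTop 0] with n hlt hn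
  have : (0 : ℝ) < n := mod_cast hn
  refine lt_of_le_of_lt ?_ hlt
  rw [div_le_div_iff₀ (by positivity) hEpos]
  calc _ = E * sparseTuranNumber n r (3 * r - 4) 3 := mul_comm _ _
    _ ≤ (n : ℝ) ^ 2 + 2 * n + 2 * E := mul_sparseTuranNumber_le n hr
    _ = _ := by field_simp

end UpperBound

section StronglySparse

variable {V : Type*} [DecidableEq V] {r : ℕ} {H : Finset (Finset V)}

/-- A strengthening of `IsSparse r (3 * r - 4) 3` that is inherited by unions of copies of a
hypergraph, provided that distinct copies share no pair of vertices covered by an edge. -/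
structure IsStronglySparse (r : ℕ) (H : Finset (Finset V)) : Prop where
  sized : (H : Set (Finset V)).Sized r
  card_inter_le_two : ∀ A ∈ H, ∀ B ∈ H, A ≠ B → #(A ∩ B) ≤ 2
  card_inter_union_le_one : ∀ A ∈ H, ∀ B ∈ H, ∀ C ∈ H, A ≠ B → A ≠ C → B ≠ C →
    2 ≤ #(A ∩ B) → #(C ∩ (A ∪ B)) ≤ 1

theorem IsStronglySparse.isSparse (hr : 2 ≤ r) (hH : IsStronglySparse r H) :
    IsSparse_s14 r (3 * r - 4) 3 H where
  sized := hH.sized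
  lt_card_sup S hS hcard := by
    have lt_of_two_le : ∀ A ∈ H, ∀ B ∈ H, ∀ C ∈ H, A ≠ B → A ≠ C → B ≠ C → 2 ≤ #(A ∩ B) →
        3 * r - 4 < #(C ∪ (A ∪ B)) := by
      intro A hA B hB C hC hAB hAC hBC h
      have := card_union_add_card_inter A B
      have := card_union_add_card_inter C (A ∪ B)
      have := hH.sized hA
      have := hH.sized hB
      have := hH.sized hC
      have := hH.card_inter_le_two A hA B hB hAB
      have := hH.card_inter_union_le_one A hA B hB C hC hAB hAC hBC h
      omega
    obtain ⟨A, B, C, hAB, hAC, hBC, rfl⟩ := card_eq_three.1 hcard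
    obtain ⟨hA, hB, hC⟩ : A ∈ H ∧ B ∈ H ∧ C ∈ H := by simpa [insert_subset_iff] using hS
    have hsup : ({A, B, C} : Finset (Finset V)).sup id = C ∪ (A ∪ B) := by
      simp [union_comm, union_left_comm]
    rw [hsup]
    by_cases hAB' : 2 ≤ #(A ∩ B)
    · exact lt_of_two_le A hA B hB C hC hAB hAC hBC hAB'
    by_cases hAC' : 2 ≤ #(A ∩ C)
    · rw [union_comm A B, union_left_comm, union_comm C A]
      exact lt_of_two_le A hA C hC B hB hAC hAB hBC.symm hAC'
    by_cases hBC' : 2 ≤ #(B ∩ C)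
    · rw [union_left_comm, union_comm C B]
      exact lt_of_two_le B hB C hC A hA hBC hAB.symm hAC.symm hBC'
    have := card_union_add_card_inter A B
    have := card_union_add_card_inter C (A ∪ B)
    have hinter : #(C ∩ (A ∪ B)) ≤ #(A ∩ C) + #(B ∩ C) := by
      rw [inter_union_distrib_left, inter_comm C A, inter_comm C B]
      exact card_union_le _ _
    have := hH.sized hA
    have := hH.sized hB
    have := hH.sized hC
    omega

end StronglySparse

section Packing

variable {V W Ω : Type*} [DecidableEq W] {r : ℕ} {H : Finset (Finset V)} {φ : Ω → V ↪ W}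

/-- The embeddings `φ ω` of `V` into `W` are determined by the image of any pair of vertices which,
for one of the two indices compared, is covered by an edge of `H`. -/
def IsPairPacking (H : Finset (Finset V)) (φ : Ω → V ↪ W) : Prop :=
  ∀ ω ω', ∀ A ∈ H, ∀ i j, ∀ i' ∈ A, ∀ j' ∈ A, i ≠ j →
    φ ω i = φ ω' i' → φ ω j = φ ω' j' → ω = ω'

theorem IsPairPacking.eq_of_two_le_card_inter (hφ : IsPairPacking H φ)
    {ω ω' : Ω} {A S : Finset V} (hA : A ∈ H) (h : 2 ≤ #(S.map (φ ω) ∩ A.map (φ ω'))) : ω = ω' := by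
  obtain ⟨x, hx, y, hy, hxy⟩ := one_lt_card.1 h
  simp only [mem_inter, Finset.mem_map] at hx hy
  obtain ⟨⟨i, -, rfl⟩, i', hi', hii'⟩ := hx
  obtain ⟨⟨j, -, rfl⟩, j', hj', hjj'⟩ := hy
  exact hφ ω ω' A hA i j i' hi' j' hj' (ne_of_apply_ne _ hxy) hii'.symm hjj'.symm

variable [Fintype Ω]

/-- The union of the copies of `H` under the embeddings `φ ω`. -/
def copies (φ : Ω → V ↪ W) (H : Finset (Finset V)) : Finset (Finset W) :=
  (univ ×ˢ H).image fun p => p.2.map (φ p.1)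

theorem forall_mem_copies {p : Finset W → Prop} :
    (∀ B ∈ copies φ H, p B) ↔ ∀ ω, ∀ A ∈ H, p (A.map (φ ω)) := by
  simp only [copies, forall_mem_image, mem_product, mem_univ, true_and, Prod.forall]

theorem IsPairPacking.card_copies [DecidableEq V] (hφ : IsPairPacking H φ) (hr : 2 ≤ r)
    (hH : IsStronglySparse r H) : #(copies φ H) = Fintype.card Ω * #H := by
  rw [copies, card_image_of_injOn, card_product, card_univ]
  rintro ⟨ω, A⟩ hA ⟨ω', B⟩ hB heq
  simp only [coe_product, coe_univ, Set.mem_prod, Set.mem_univ, mem_coe, true_and] at hA hB heq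
  obtain rfl : ω = ω' := hφ.eq_of_two_le_card_inter hB (S := A) <| by
    rwa [heq, inter_self, card_map, hH.sized hB]
  rw [map_injective _ heq]

theorem IsPairPacking.isStronglySparse_copies [DecidableEq V] (hφ : IsPairPacking H φ)
    (hH : IsStronglySparse r H) : IsStronglySparse r (copies φ H) where
  sized _ hB := forall_mem_copies (p := (#· = r)).2
    (fun _ _ hA => (card_map _).trans (hH.sized hA)) _ hB
  card_inter_le_two := by
    simp only [forall_mem_copies]
    intro ω A hA ω' B hB hAB
    by_contra! h
    obtain rfl := hφ.eq_of_two_le_card_inter hB h.le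
    rw [← map_inter, card_map] at h
    exact h.not_ge (hH.card_inter_le_two A hA B hB (ne_of_apply_ne _ hAB))
  card_inter_union_le_one := by
    simp only [forall_mem_copies]
    intro ω A hA ω' B hB ω'' C hC hAB hAC hBC hinter
    by_contra! h
    obtain rfl := hφ.eq_of_two_le_card_inter hB hinter
    rw [← map_inter, card_map] at hinter
    rw [← map_union, inter_comm] at h
    obtain rfl := hφ.eq_of_two_le_card_inter hC h
    rw [← map_inter, card_map, inter_comm] at h
    exact h.not_ge (hH.card_inter_union_le_one A hA B hB C hC (ne_of_apply_ne _ hAB)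
      (ne_of_apply_ne _ hAC) (ne_of_apply_ne _ hBC) hinter)

end Packing

section Blowup

theorem isPairPacking_affine {V R : Type*} [CommRing R] (H : Finset (Finset V)) {ν : V → R}
    (hν : Pairwise fun i j => IsUnit (ν i - ν j)) :
    IsPairPacking H fun p : R × R =>
      (⟨fun v => (v, p.1 + p.2 * ν v), fun _ _ h => congrArg Prod.fst h⟩ : V ↪ V × R) := by
  rintro ⟨a, b⟩ ⟨a', b'⟩ A - i j i' - j' - hij hi hj
  obtain ⟨rfl, hi⟩ := Prod.mk.inj hi
  obtain ⟨rfl, hj⟩ := Prod.mk.inj hj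
  have hb : b = b' := sub_eq_zero.1 <| (hν hij).mul_left_eq_zero.1 <| by linear_combination hi - hj
  subst hb
  exact Prod.ext (add_right_cancel hi) rfl

theorem isUnit_natCast_sub_natCast {m x y : ℕ} (k : ℕ) (hx : x < m) (hy : y < m) (hxy : x ≠ y) :
    IsUnit ((x : ZMod (k * m.factorial + 1)) - y) := by
  wlog hlt : y < x generalizing x y
  · rw [← neg_sub, IsUnit.neg_iff]
    exact this hy hx hxy.symm (lt_of_le_of_ne (not_lt.1 hlt) hxy)
  rw [← Nat.cast_sub hlt.le, ZMod.isUnit_iff_coprime]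
  have hdvd : x - y ∣ m.factorial := Nat.dvd_factorial (by omega) (by omega)
  exact Nat.Coprime.coprime_dvd_left hdvd (by simp)

variable {V : Type*} [DecidableEq V] [Fintype V] {r : ℕ} {H : Finset (Finset V)}

theorem IsStronglySparse.mul_card_le_sparseTuranNumber (hr : 2 ≤ r)
    (hH : IsStronglySparse r H) (k n : ℕ)
    (hn : Fintype.card V * (Fintype.card V).factorial * (k + 1) ≤ n) :
    k ^ 2 * ((Fintype.card V).factorial ^ 2 * #H) ≤ sparseTuranNumber n r (3 * r - 4) 3 := by
  set m := Fintype.card V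
  have hν : Pairwise fun i j : V =>
      IsUnit ((Fintype.equivFin V i : ZMod (k * m.factorial + 1)) - Fintype.equivFin V j) :=
    fun i j hij => isUnit_natCast_sub_natCast k (Fin.is_lt _) (Fin.is_lt _)
      (Fin.val_injective.ne ((Fintype.equivFin V).injective.ne hij))
  have hφ := isPairPacking_affine H hν
  calc k ^ 2 * (m.factorial ^ 2 * #H) = k * m.factorial * (k * m.factorial) * #H := by ring
    _ ≤ (k * m.factorial + 1) * (k * m.factorial + 1) * #H := by gcongr <;> omega
    _ = #(copies _ H) := by rw [hφ.card_copies hr hH, Fintype.card_prod, ZMod.card]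
    _ ≤ sparseTuranNumber n r (3 * r - 4) 3 := by
        refine ((hφ.isStronglySparse_copies hH).isSparse hr).card_le_sparseTuranNumber ?_
        calc Fintype.card (V × ZMod (k * m.factorial + 1)) = m * (k * m.factorial + 1) := by
              rw [Fintype.card_prod, ZMod.card]
          _ ≤ m * (k * m.factorial + m.factorial) := by gcongr; exact m.factorial_pos
          _ = m * m.factorial * (k + 1) := by ring
          _ ≤ n := hn

theorem tendsto_natCast_sub_div_div_atTop (a : ℕ) {c : ℕ} (hc : 0 < c) :
    Tendsto (fun n : ℕ => (((n - a) / c : ℕ) : ℝ) / n) atTop (𝓝 (1 / c)) := by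
  have hc' : (0 : ℝ) < c := mod_cast hc
  have hlower : Tendsto (fun n : ℕ => (1 - (c + a) * (1 / (n : ℝ))) / c) atTop (𝓝 (1 / c)) := by
    simpa using ((tendsto_one_div_atTop_nhds_zero_nat.const_mul (c + a : ℝ)).const_sub 1).div_const
      (c : ℝ)
  refine tendsto_of_tendsto_of_tendsto_of_le_of_le' hlower tendsto_const_nhds ?_ ?_ <;>
    filter_upwards [eventually_gt_atTop 0] with n hn <;> have : (0 : ℝ) < n := mod_cast hn
  · have hle : (n : ℝ) ≤ ((n - a) / c : ℕ) * c + (c + a) := by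
      have := Nat.lt_div_mul_add (a := n - a) hc
      exact_mod_cast (by omega : n ≤ (n - a) / c * c + (c + a))
    rw [div_le_div_iff₀ hc' this]
    calc (1 - (c + a) * (1 / (n : ℝ))) * n = n - (c + a) := by field_simp
      _ ≤ ((n - a) / c : ℕ) * c := by linarith
  · rw [div_le_div_iff₀ this hc', one_mul]
    exact_mod_cast (Nat.div_mul_le_self _ _).trans (Nat.sub_le n a)

theorem eventually_lt_div_sq {f : ℕ → ℕ} {c h : ℕ} (hc : 0 < c)
    (hf : ∀ k n, c * (k + 1) ≤ n → k ^ 2 * h ≤ f n) {a : ℝ} (ha : a < h / (c : ℝ) ^ 2) :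
    ∀ᶠ n : ℕ in atTop, a < (f n : ℝ) / n ^ 2 := by
  have hlim : Tendsto (fun n : ℕ => ((((n - c) / c : ℕ) : ℝ) / n) ^ 2 * h) atTop
      (𝓝 (h / (c : ℝ) ^ 2)) := by
    convert ((tendsto_natCast_sub_div_div_atTop c hc).pow 2).mul_const (h : ℝ) using 2
    ring
  filter_upwards [hlim.eventually_const_lt ha, eventually_ge_atTop c] with n hlt hn
  have hle : (((n - c) / c : ℕ) : ℝ) ^ 2 * h ≤ f n := by
    have := Nat.mul_div_le (n - c) c
    exact_mod_cast hf ((n - c) / c) n (by rw [mul_add_one]; omega)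
  calc a < ((((n - c) / c : ℕ) : ℝ) / n) ^ 2 * h := hlt
    _ = (((n - c) / c : ℕ) : ℝ) ^ 2 * h / n ^ 2 := by ring
    _ ≤ f n / n ^ 2 := by gcongr

theorem IsStronglySparse.eventually_lt_sparseTuranNumber_div_sq [Nonempty V] (hr : 2 ≤ r)
    (hH : IsStronglySparse r H) {a : ℝ} (ha : a < #H / (Fintype.card V : ℝ) ^ 2) :
    ∀ᶠ n : ℕ in atTop, a < (sparseTuranNumber n r (3 * r - 4) 3 : ℝ) / n ^ 2 := by
  have hfactorial := (Fintype.card V).factorial_pos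
  refine eventually_lt_div_sq (Nat.mul_pos Fintype.card_pos hfactorial)
    (hH.mul_card_le_sparseTuranNumber hr) (ha.trans_eq ?_)
  have : ((Fintype.card V).factorial : ℝ) ≠ 0 := mod_cast hfactorial.ne'
  push_cast
  rw [mul_comm (Fintype.card V : ℝ), mul_pow, mul_div_mul_left _ _ (pow_ne_zero 2 this)]

end Blowup

section RealizesColorings

variable {V R C : Type*} [CommRing R] [CommGroup C] {κ : Rˣ →* C}

/-- Every coloring of the pairs of points of `V` (loops are ignored) is the coloring by `κ` of the
differences of some configuration `V → R`, all of these differences being units. -/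
def RealizesColorings (κ : Rˣ →* C) (V : Type*) : Prop :=
  ∀ c : Sym2 V → C, ∃ p : V → R, ∀ i j, i ≠ j → ∃ u : Rˣ, (u : R) = p i - p j ∧ κ u = c s(i, j)

/-- The homomorphism `κ`, applied in each coordinate. -/
def piUnitsHom (ι : Type*) (κ : Rˣ →* C) : (ι → R)ˣ →* (ι → C) :=
  MonoidHom.pi fun k => κ.comp (Units.map (Pi.evalMonoidHom (fun _ => R) k))

theorem RealizesColorings.piUnitsHom (hκ : RealizesColorings κ V) (ι : Type*) :
    RealizesColorings (piUnitsHom ι κ) V := by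
  intro c
  choose p hp using fun k => hκ fun e => c e k
  choose u hu hκu using hp
  refine ⟨fun i k => p k i, fun i j hij => ⟨MulEquiv.piUnits.symm fun k => u k i j hij, ?_, ?_⟩⟩
  · exact funext fun k => hu k i j hij
  · exact funext fun k => (congrArg κ (Units.ext rfl)).trans (hκu k i j hij)

theorem exists_forall_eq_imp_eq_and_eq {α C : Type*} [Fintype C] {M : ℕ} {P : Finset α}
    (h : M * #P + 1 ≤ Fintype.card C) :
    ∃ c : Fin M → α → C, ∀ σ σ' e, ∀ e' ∈ P, c σ e = c σ' e' → σ = σ' ∧ e = e' := by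
  classical
  obtain ⟨g⟩ : Nonempty (Option (Fin M × P) ↪ C) :=
    Function.Embedding.nonempty_of_card_le (by simpa using h)
  refine ⟨fun σ e => g (if he : e ∈ P then some (σ, ⟨e, he⟩) else none), ?_⟩
  intro σ σ' e e' he' heq
  have := g.injective heq
  aesop

/-- The pairs of vertices contained in an edge. -/
def coveredPairs [DecidableEq V] (H : Finset (Finset V)) : Finset (Sym2 V) :=
  H.biUnion fun A => A.offDiag.image Sym2.mk.uncurry

theorem mk_mem_coveredPairs [DecidableEq V] {H : Finset (Finset V)} {A : Finset V} (hA : A ∈ H)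
    {i j : V} (hi : i ∈ A) (hj : j ∈ A) (hij : i ≠ j) : s(i, j) ∈ coveredPairs H :=
  mem_biUnion.2 ⟨A, hA, mem_image.2 ⟨(i, j), mem_offDiag.2 ⟨hi, hj, hij⟩, rfl⟩⟩

/-- The units of color `1`, up to sign. -/
abbrev KerModSign (κ : Rˣ →* C) : Type _ :=
  κ.ker ⧸ (Subgroup.zpowers (-1 : Rˣ)).subgroupOf κ.ker

/-- A unit representing an element of `KerModSign κ`, which determines it up to sign. -/
noncomputable def KerModSign.repr (a : KerModSign κ) : Rˣ :=
  (a.out : κ.ker)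

theorem KerModSign.map_repr (a : KerModSign κ) : κ a.repr = 1 :=
  (a.out : κ.ker).2

theorem KerModSign.eq_of_repr_eq_or_eq_neg {a a' : KerModSign κ}
    (h : a.repr = a'.repr ∨ a.repr = -a'.repr) : a = a' := by
  rw [← a.out_eq', ← a'.out_eq', QuotientGroup.eq, Subgroup.mem_subgroupOf]
  change a.repr⁻¹ * a'.repr ∈ _
  obtain h | h := h <;> simp [h]

theorem card_units_le [Finite C] [Finite R] (κ : Rˣ →* C) :
    Nat.card Rˣ ≤ 2 * Nat.card C * Nat.card (KerModSign κ) := by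
  have hrange : Nat.card κ.range ≤ Nat.card C := Subgroup.card_le_card_group _
  have hsign : Nat.card ((Subgroup.zpowers (-1 : Rˣ)).subgroupOf κ.ker) ≤ 2 := by
    calc _ ≤ Nat.card (Subgroup.zpowers (-1 : Rˣ)) :=
          Nat.le_of_dvd Nat.card_pos
            (Subgroup.card_comap_dvd_of_injective _ _ κ.ker.subtype_injective)
      _ ≤ 2 := by
        rw [Nat.card_zpowers]
        exact orderOf_le_of_pow_eq_one two_pos (by simp)
  calc Nat.card Rˣ = Nat.card κ.range * Nat.card κ.ker := by
        rw [← Subgroup.index_ker, mul_comm, Subgroup.card_mul_index]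
    _ ≤ Nat.card C * (Nat.card (KerModSign κ) * 2) := by
        rw [Subgroup.card_eq_card_quotient_mul_card_subgroup
          ((Subgroup.zpowers (-1 : Rˣ)).subgroupOf κ.ker)]
        gcongr
    _ = _ := by ring

variable [DecidableEq V] {H : Finset (Finset V)}

/-- The affine images `a • p σ + b` of the configurations `p σ`, where `a` has color `1`. As a
common pair has the same color in two of them, the colors identify the configuration and the pair.
-/
theorem RealizesColorings.exists_isPairPacking [Fintype C] (hκ : RealizesColorings κ V)
    (htwo : (2 : R) ≠ 0) {M : ℕ} (hM : M * #(coveredPairs H) + 1 ≤ Fintype.card C) :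
    ∃ φ : Fin M × KerModSign κ × R → V ↪ R, IsPairPacking H φ := by
  have : Nontrivial R := nontrivial_of_ne _ _ htwo
  obtain ⟨c, hc⟩ := exists_forall_eq_imp_eq_and_eq hM
  choose p u hu hκu using fun σ => hκ (c σ)
  let φ (ω : Fin M × KerModSign κ × R) (i : V) : R := ω.2.1.repr * p ω.1 i + ω.2.2
  have hφ_sub : ∀ ω i j (hij : i ≠ j), φ ω i - φ ω j = (ω.2.1.repr * u ω.1 i j hij : Rˣ) := by
    intro ω i j hij
    rw [Units.val_mul, hu]
    ring
  have hφ : ∀ ω, Function.Injective (φ ω) := by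
    intro ω i j h
    by_contra hij
    exact (Units.ne_zero _) ((hφ_sub ω i j hij).symm.trans (sub_eq_zero.2 h))
  refine ⟨fun ω => ⟨φ ω, hφ ω⟩, ?_⟩
  rintro ⟨σ, a, b⟩ ⟨σ', a', b'⟩ A hA i j i' hi' j' hj' hij hi hj
  have hij' : i' ≠ j' := by
    rintro rfl
    exact hij (hφ _ (hi.trans hj.symm))
  have hmul : a.repr * u σ i j hij = a'.repr * u σ' i' j' hij' := by
    refine Units.ext ?_
    rw [← hφ_sub (σ, a, b), ← hφ_sub (σ', a', b')]
    exact congrArg₂ _ hi hj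
  have hcolor : c σ s(i, j) = c σ' s(i', j') := by
    simpa [KerModSign.map_repr, hκu] using congrArg κ hmul
  obtain ⟨rfl, hpair⟩ := hc _ _ _ _ (mk_mem_coveredPairs hA hi' hj' hij') hcolor
  obtain ⟨rfl, rfl⟩ | ⟨rfl, rfl⟩ := Sym2.eq_iff.1 hpair
  · obtain rfl := KerModSign.eq_of_repr_eq_or_eq_neg (.inl (mul_right_cancel hmul))
    obtain rfl : b = b' := add_left_cancel hi
    rfl
  · have hswap : u σ j i hij' = -u σ i j hij := by
      refine Units.ext ?_
      rw [Units.val_neg, hu, hu, neg_sub]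
    have hneg : a.repr = -a'.repr := by
      rw [hswap, mul_neg, ← neg_mul] at hmul
      exact mul_right_cancel hmul
    obtain rfl := KerModSign.eq_of_repr_eq_or_eq_neg (.inr hneg)
    have : (a.repr : R) = -a.repr := congrArg Units.val hneg
    exact absurd (a.repr.isUnit.mul_left_eq_zero.1 (by linear_combination this)) htwo

theorem IsStronglySparse.exists_of_realizesColorings [Fintype C] [Finite R] [DecidableEq R]
    {r : ℕ} (hr : 2 ≤ r) (hH : IsStronglySparse r H) (hκ : RealizesColorings κ V)
    (htwo : (2 : R) ≠ 0) {M : ℕ} (hM : M * #(coveredPairs H) + 1 ≤ Fintype.card C) :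
    ∃ H' : Finset (Finset R), IsStronglySparse r H' ∧
      M * Nat.card Rˣ * Nat.card R * #H ≤ 2 * Nat.card C * #H' := by
  classical
  have := Fintype.ofFinite R
  have := Fintype.ofFinite (KerModSign κ)
  obtain ⟨φ, hφ⟩ := hκ.exists_isPairPacking htwo hM
  refine ⟨copies φ H, hφ.isStronglySparse_copies hH, ?_⟩
  calc M * Nat.card Rˣ * Nat.card R * #H
      ≤ M * (2 * Nat.card C * Nat.card (KerModSign κ)) * Nat.card R * #H := by
        gcongr
        exact card_units_le κ
    _ = 2 * Nat.card C * #(copies φ H) := by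
        rw [hφ.card_copies hr hH, Fintype.card_prod, Fintype.card_prod, Fintype.card_fin,
          Nat.card_eq_fintype_card (α := KerModSign κ), Nat.card_eq_fintype_card (α := R)]
        ring

end RealizesColorings

section QuadraticCharacter

variable {F V : Type*} [Field F] [Fintype F] [DecidableEq F] [Fintype V]

theorem two_mul_card_quadraticChar_eq_neg_one (hF : ringChar F ≠ 2) :
    2 * #{a : F | quadraticChar F a = -1} + 1 = Fintype.card F := by
  have heq : ∀ a : F, quadraticChar F a =
      1 - 2 * (if quadraticChar F a = -1 then 1 else 0) - if a = 0 then 1 else 0 := by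
    intro a
    obtain rfl | ha := eq_or_ne a 0
    · simp
    · obtain h | h := quadraticChar_dichotomy ha <;> simp [h, ha]
  have hsum := quadraticChar_sum_zero hF
  rw [sum_congr rfl fun a _ => heq a, sum_sub_distrib, sum_sub_distrib, ← mul_sum, sum_boole,
    sum_ite_eq'] at hsum
  simp only [sum_const, card_univ, mem_univ, if_true, nsmul_eq_mul, mul_one] at hsum
  omega

theorem exists_quadraticChar_sub_eq_neg (hF : ringChar F ≠ 2) {T : Finset F}
    (hT : 2 * #T + 1 < Fintype.card F) {x x' : F} (hx : x ≠ x') :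
    ∃ y ∉ T, y ≠ x ∧ quadraticChar F (x' - y) = -quadraticChar F (x - y) := by
  set N : Finset F := {a | quadraticChar F a = -1}
  have hN : 2 * #N + 1 = Fintype.card F := two_mul_card_quadraticChar_eq_neg_one hF
  have hN_one : ∀ ν ∈ N, ν ≠ 0 ∧ 1 - ν ≠ 0 := by
    intro ν hν
    have : quadraticChar F ν = -1 := (mem_filter.1 hν).2
    refine ⟨?_, fun h => ?_⟩
    · rintro rfl
      simp at this
    · obtain rfl := sub_eq_zero.1 h
      simp at this
  -- `(x' - ν * x) / (1 - ν)` is the point `y` with `x' - y = ν * (x - y)`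
  have hinj : Set.InjOn (fun ν => (x' - ν * x) / (1 - ν)) N := by
    intro ν hν μ hμ h
    simp only at h
    rw [div_eq_div_iff (hN_one ν hν).2 (hN_one μ hμ).2] at h
    have : (x - x') * (ν - μ) = 0 := by linear_combination -h
    exact sub_eq_zero.1 ((mul_eq_zero.1 this).resolve_left (sub_ne_zero.2 hx))
  obtain ⟨y, hy, hyT⟩ := exists_mem_notMem_of_card_lt_card (s := T)
    (t := N.image fun ν => (x' - ν * x) / (1 - ν)) (by rw [card_image_of_injOn hinj]; omega)
  obtain ⟨ν, hν, rfl⟩ := mem_image.1 hy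
  have hν_one := (hN_one ν hν).2
  refine ⟨_, hyT, ?_, ?_⟩
  · intro h
    rw [div_eq_iff hν_one] at h
    exact hx (by linear_combination -h)
  · have : x' - (x' - ν * x) / (1 - ν) = ν * (x - (x' - ν * x) / (1 - ν)) := by
      field_simp
      ring
    rw [this, map_mul, (mem_filter.1 hν).2, neg_one_mul]

theorem exists_ne_forall_quadraticChar_sub_eq (u : V ↪ F)
    (hcard : 2 ^ Fintype.card V + Fintype.card V < Fintype.card F) :
    ∃ x x', x ≠ x' ∧ x ∉ univ.map u ∧
      ∀ j, quadraticChar F (x' - u j) = quadraticChar F (x - u j) := by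
  classical
  obtain ⟨x, hx, x', hx', hne, heq⟩ := exists_ne_map_eq_of_card_lt_of_maps_to
    (s := (univ.map u)ᶜ) (t := (univ : Finset (V → Bool)))
    (f := fun x j => decide (quadraticChar F (x - u j) = 1))
    (by simp only [card_compl, card_map, card_univ, Fintype.card_fun, Fintype.card_bool]; omega)
    fun _ _ => mem_univ _
  rw [mem_compl] at hx hx'
  refine ⟨x, x', hne, hx, fun j => ?_⟩
  have sub_ne_zero_of_notMem : ∀ z ∉ univ.map u, z - u j ≠ 0 := fun z hz h =>
    hz (Finset.mem_map.2 ⟨j, mem_univ j, (sub_eq_zero.1 h).symm⟩)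
  have h := congrFun heq j
  simp only [decide_eq_decide] at h
  obtain hj | hj := quadraticChar_dichotomy (sub_ne_zero_of_notMem x hx) <;>
    obtain hj' | hj' := quadraticChar_dichotomy (sub_ne_zero_of_notMem x' hx') <;>
    simp [hj, hj'] at h ⊢

theorem quadraticChar_sub_comm (hneg : quadraticChar F (-1) = 1) (a b : F) :
    quadraticChar F (a - b) = quadraticChar F (b - a) := by
  rw [← neg_sub, ← neg_one_mul, map_mul, hneg, one_mul]

theorem exists_forall_quadraticChar_sub_eq_ite_mul [DecidableEq V] (hF : ringChar F ≠ 2)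
    (hneg : quadraticChar F (-1) = 1)
    (hcard : 2 ^ Fintype.card V + 2 * Fintype.card V + 1 < Fintype.card F) (e : Sym2 V) :
    ∃ t t' : V → F, ∀ i j, i ≠ j → t i ≠ t j ∧ quadraticChar F (t' i - t' j) =
      (if e = s(i, j) then -1 else 1) * quadraticChar F (t i - t j) := by
  have := pow_pos two_pos (Fintype.card V) (M₀ := ℕ)
  obtain ⟨u⟩ : Nonempty (V ↪ F) := Function.Embedding.nonempty_of_card_le (by omega)
  induction e with | _ i₀ j₀
  obtain rfl | _ := eq_or_ne i₀ j₀
  · refine ⟨u, u, fun i j h => ⟨u.injective.ne h, ?_⟩⟩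
    rw [if_neg (by simp only [Sym2.eq_iff]; grind), one_mul]
  obtain ⟨x, x', hne, hx, hsame⟩ := exists_ne_forall_quadraticChar_sub_eq u (by omega)
  obtain ⟨y, hy, hyx, hflip⟩ := exists_quadraticChar_sub_eq_neg hF (T := univ.map u)
    (by rw [card_map, card_univ]; omega) hne
  have hux : ∀ i, u i ≠ x := fun i h => hx (by simp [← h])
  have huy : ∀ i, u i ≠ y := fun i h => hy (by simp [← h])
  have hcomm := quadraticChar_sub_comm hneg
  refine ⟨fun i => if i = i₀ then x else if i = j₀ then y else u i,
    fun i => if i = i₀ then x' else if i = j₀ then y else u i, fun i j h => ⟨?_, ?_⟩⟩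
  · have := u.injective.ne h
    grind
  · simp only [Sym2.eq_iff]
    grind

/-- The product over all coordinates of the quadratic characters. -/
noncomputable def prodQuadraticChar (ι F : Type*) [Fintype ι] [Field F] [Fintype F]
    [DecidableEq F] : (ι → F)ˣ →* ℤˣ :=
  ∏ k, (quadraticChar F).toUnitHom.comp (Units.map (Pi.evalMonoidHom (fun _ => F) k))

theorem coe_prodQuadraticChar {ι : Type*} [Fintype ι] (u : (ι → F)ˣ) :
    (prodQuadraticChar ι F u : ℤ) = ∏ k, quadraticChar F ((u : ι → F) k) := by
  simp [prodQuadraticChar]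

theorem realizesColorings_prodQuadraticChar (hF : ringChar F ≠ 2)
    (hneg : quadraticChar F (-1) = 1)
    (hcard : 2 ^ Fintype.card V + 2 * Fintype.card V + 1 < Fintype.card F) :
    RealizesColorings (prodQuadraticChar (Sym2 V) F) V := by
  classical
  choose t t' ht using exists_forall_quadraticChar_sub_eq_ite_mul (V := V) hF hneg hcard
  let b : Sym2 V → ℤ := Sym2.lift ⟨fun i j => ∏ e, quadraticChar F (t e i - t e j),
    fun i j => prod_congr rfl fun e _ => quadraticChar_sub_comm hneg _ _⟩
  intro c
  let p (i : V) (e : Sym2 V) : F := if b e = c e then t e i else t' e i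
  have hp : ∀ i j, i ≠ j → ∀ e, quadraticChar F (p i e - p j e) =
      (if e = s(i, j) then if b e = c e then 1 else -1 else 1) *
        quadraticChar F (t e i - t e j) := by
    intro i j hij e
    have := (ht e i j hij).2
    grind
  have hp_ne : ∀ i j, i ≠ j → ∀ e, p i e - p j e ≠ 0 := by
    intro i j hij e h
    have hχ := quadraticChar_dichotomy (sub_ne_zero.2 (ht e i j hij).1)
    have := hp i j hij e
    rw [h, quadraticChar_zero] at this
    grind
  refine ⟨p, fun i j hij => ⟨MulEquiv.piUnits.symm fun e => Units.mk0 _ (hp_ne i j hij e), rfl,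
    Units.ext ?_⟩⟩
  have hb : b s(i, j) = 1 ∨ b s(i, j) = -1 := by
    refine Int.isUnit_iff.1 (IsUnit.prod_univ_iff.2 fun e => Int.isUnit_iff.2 ?_)
    exact quadraticChar_dichotomy (sub_ne_zero.2 (ht e i j hij).1)
  have hc := Int.isUnit_iff.1 (c s(i, j)).isUnit
  calc _ = ∏ e, quadraticChar F (p i e - p j e) := coe_prodQuadraticChar _
    _ = (if b s(i, j) = c s(i, j) then 1 else -1) * b s(i, j) := by
        rw [prod_congr rfl fun e _ => hp i j hij e, prod_mul_distrib, prod_ite_eq',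
          if_pos (mem_univ _)]
        rfl
    _ = c s(i, j) := by grind

end QuadraticCharacter

section LowerBound

theorem card_units_pi (ι R : Type*) [Finite ι] [Monoid R] :
    Nat.card (ι → R)ˣ = Nat.card Rˣ ^ Nat.card ι :=
  (Nat.card_congr MulEquiv.piUnits.toEquiv).trans Nat.card_fun

theorem exists_mul_add_one_le_two_pow {P : ℕ} (hP : 0 < P) {a h : ℝ} (ha : a < h / P) :
    ∃ s M : ℕ, s ≠ 0 ∧ M * P + 1 ≤ 2 ^ s ∧ a < h * (M / 2 ^ s) := by
  have hlim : Tendsto (fun s : ℕ => h * (((2 ^ s - 1) / P : ℕ) / 2 ^ s : ℝ)) atTop (𝓝 (h / P)) := by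
    simpa [Function.comp_def, div_eq_mul_inv] using ((tendsto_natCast_sub_div_div_atTop 1 hP).comp
      (tendsto_pow_atTop_atTop_of_one_lt one_lt_two)).const_mul h
  obtain ⟨s, hlt, hs⟩ := ((hlim.eventually_const_lt ha).and (eventually_ne_atTop 0)).exists
  refine ⟨s, (2 ^ s - 1) / P, hs, ?_, hlt⟩
  have := Nat.div_mul_le_self (2 ^ s - 1) P
  have := Nat.one_le_two_pow (n := s)
  omega

theorem exists_prime_one_mod_four_lt_mul_pow {a b : ℝ} (hab : a < b) (I K : ℕ) :
    ∃ q : ℕ, q.Prime ∧ q % 4 = 1 ∧ K < q ∧ a < b * (1 - 1 / q) ^ I := by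
  have hlim : Tendsto (fun q : ℕ => b * (1 - 1 / (q : ℝ)) ^ I) atTop (𝓝 b) := by
    simpa using ((tendsto_one_div_atTop_nhds_zero_nat.const_sub 1).pow I).const_mul b
  obtain ⟨q, ⟨hq, hmod⟩, hKq, hlt⟩ :=
    ((Nat.frequently_atTop_modEq_one four_ne_zero).and_eventually
      ((eventually_gt_atTop K).and (hlim.eventually_const_lt hab))).exists
  exact ⟨q, hq, hmod, hKq, hlt⟩

variable {V : Type*} [DecidableEq V] {r : ℕ} {H : Finset (Finset V)}

theorem IsStronglySparse.exists_zmod [Fintype V] [Nonempty V] (hr : 2 ≤ r)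
    (hH : IsStronglySparse r H) {q : ℕ} [Fact q.Prime] (hq : q % 4 = 1)
    (hcard : 2 ^ Fintype.card V + 2 * Fintype.card V + 1 < q)
    {s M : ℕ} (hs : s ≠ 0) (hM : M * #(coveredPairs H) + 1 ≤ 2 ^ s) :
    ∃ H' : Finset (Finset (Fin s → Sym2 V → ZMod q)), IsStronglySparse r H' ∧
      M * (q - 1) ^ (Nat.card (Sym2 V) * s) * q ^ (Nat.card (Sym2 V) * s) * #H ≤
        2 * 2 ^ s * #H' := by
  have : NeZero s := ⟨hs⟩
  have hchar : ringChar (ZMod q) ≠ 2 := by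
    rw [ZMod.ringChar_zmod_n]
    omega
  have hneg : quadraticChar (ZMod q) (-1) = 1 := by
    rw [quadraticChar_one_iff_isSquare (neg_ne_zero.2 one_ne_zero),
      FiniteField.isSquare_neg_one_iff, ZMod.card]
    omega
  have hκ := realizesColorings_prodQuadraticChar (V := V) hchar hneg (by rwa [ZMod.card])
  have htwo : (2 : Fin s → Sym2 V → ZMod q) ≠ 0 := fun h =>
    Ring.two_ne_zero hchar (congrFun (congrFun h 0) s(Classical.arbitrary V, Classical.arbitrary V))
  obtain ⟨H', hH', hle⟩ :=
    hH.exists_of_realizesColorings hr (hκ.piUnitsHom (Fin s)) htwo (by simpa using hM)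
  refine ⟨H', hH', ?_⟩
  have hunits : Nat.card (ZMod q)ˣ = q - 1 := by rw [Nat.card_eq_fintype_card, ZMod.card_units]
  have hcolors : Nat.card (Fin s → ℤˣ) = 2 ^ s := by simp
  rwa [card_units_pi, card_units_pi, hunits, Nat.card_fun, Nat.card_fun, Nat.card_zmod,
    Nat.card_fin, hcolors, ← pow_mul, ← pow_mul] at hle

theorem IsStronglySparse.eventually_lt_of_lt_card_div_card_coveredPairs [Finite V] (hr : 2 ≤ r)
    (hH : IsStronglySparse r H) (hpairs : (coveredPairs H).Nonempty) {a : ℝ}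
    (ha : a < #H / 2 / #(coveredPairs H)) :
    ∀ᶠ n : ℕ in atTop, a < (sparseTuranNumber n r (3 * r - 4) 3 : ℝ) / n ^ 2 := by
  have := Fintype.ofFinite V
  have : Nonempty V := ⟨hpairs.choose.out.1⟩
  obtain ⟨s, M, hs, hM, has⟩ := exists_mul_add_one_le_two_pow hpairs.card_pos ha
  obtain ⟨q, hq, hmod, hcard, haq⟩ := exists_prime_one_mod_four_lt_mul_pow has
    (Nat.card (Sym2 V) * s) (2 ^ Fintype.card V + 2 * Fintype.card V + 1)
  have := Fact.mk hq
  obtain ⟨H', hH', hle⟩ := hH.exists_zmod hr hmod hcard hs hM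
  refine hH'.eventually_lt_sparseTuranNumber_div_sq hr (haq.trans_le ?_)
  set I := Nat.card (Sym2 V) * s
  have hcardR : Fintype.card (Fin s → Sym2 V → ZMod q) = q ^ I := by
    simp [I, ← pow_mul, ZMod.card]
  have hle' : (M : ℝ) * (q - 1) ^ I * q ^ I * #H ≤ 2 * 2 ^ s * #H' := by
    rw [← Nat.cast_pred hq.pos]
    exact_mod_cast hle
  have hq_pos : (0 : ℝ) < q := mod_cast hq.pos
  calc #H / 2 * (M / 2 ^ s) * (1 - 1 / (q : ℝ)) ^ I
      = M * (q - 1) ^ I * q ^ I * #H / (2 * 2 ^ s) / (q ^ I) ^ 2 := by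
        rw [one_sub_div hq_pos.ne', div_pow]
        field_simp
    _ ≤ #H' / (q ^ I) ^ 2 := by
        gcongr
        rw [div_le_iff₀ (by positivity)]
        linarith
    _ = _ := by rw [hcardR, Nat.cast_pow]

end LowerBound

section TwoEdges

variable {V : Type*} [DecidableEq V] {r : ℕ} {A B : Finset V}

theorem isStronglySparse_pair (hA : #A = r) (hB : #B = r) (hAB : #(A ∩ B) ≤ 2) :
    IsStronglySparse r {A, B} where
  sized := by simp [Set.Sized, hA, hB]
  card_inter_le_two := by simp [inter_comm B A, hAB]
  card_inter_union_le_one := by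
    simp only [mem_insert, mem_singleton]
    rintro C (rfl | rfl) D (rfl | rfl) E (rfl | rfl) <;> simp

theorem card_coveredPairs_pair (A B : Finset V) :
    #(coveredPairs {A, B}) + (#(A ∩ B)).choose 2 = (#A).choose 2 + (#B).choose 2 := by
  have hinter : A.offDiag.image Sym2.mk.uncurry ∩ B.offDiag.image Sym2.mk.uncurry =
      (A ∩ B).offDiag.image Sym2.mk.uncurry := by
    ext e
    induction e
    simp only [mem_inter, Finset.mem_image, mem_offDiag]
    aesop
  simp only [← Sym2.card_image_offDiag, ← hinter, coveredPairs, biUnion_insert,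
    singleton_biUnion, card_union_add_card_inter]

theorem exists_card_inter_eq_two (hr : 2 ≤ r) :
    ∃ A B : Finset (Fin (2 * r - 2)), #A = r ∧ #B = r ∧ #(A ∩ B) = 2 := by
  obtain ⟨A, -, hA⟩ := exists_subset_card_eq (s := (univ : Finset (Fin (2 * r - 2)))) (n := r)
    (by rw [card_fin]; omega)
  obtain ⟨T, hTA, hT⟩ := exists_subset_card_eq (s := A) (n := 2) (by omega)
  have hdisj : Disjoint Aᶜ T := disjoint_compl_left.mono_right hTA
  refine ⟨A, Aᶜ ∪ T, hA, ?_, ?_⟩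
  · rw [card_union_of_disjoint hdisj, card_compl, Fintype.card_fin, hA, hT]
    omega
  · rw [inter_union_distrib_left, inter_compl, empty_union, inter_eq_right.2 hTA, hT]

theorem eventually_lt_sparseTuranNumber_div_sq (hr : 3 ≤ r) {a : ℝ}
    (ha : a < 1 / ((r : ℝ) ^ 2 - r - 1)) :
    ∀ᶠ n : ℕ in atTop, a < (sparseTuranNumber n r (3 * r - 4) 3 : ℝ) / n ^ 2 := by
  obtain ⟨A, B, hA, hB, hAB⟩ := exists_card_inter_eq_two (r := r) (by omega)
  have hne : A ≠ B := by
    rintro rfl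
    rw [inter_self] at hAB
    omega
  have hcount := card_coveredPairs_pair A B
  rw [hA, hB, hAB, Nat.choose_self] at hcount
  have hpairs : (#(coveredPairs {A, B}) : ℝ) = (r : ℝ) ^ 2 - r - 1 := by
    have : (#(coveredPairs {A, B}) : ℝ) + 1 = r.choose 2 + r.choose 2 := mod_cast hcount
    rw [Nat.cast_choose_two] at this
    linarith
  have hchoose : 3 ≤ r.choose 2 := Nat.choose_le_choose 2 hr
  refine (isStronglySparse_pair hA hB hAB.le).eventually_lt_of_lt_card_div_card_coveredPairs
    (by omega) (card_pos.1 (by omega)) ?_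
  rwa [hpairs, card_pair hne, Nat.cast_ofNat, div_self two_ne_zero]

end TwoEdges

/-- For every fixed r ≥ 3, `f_r(n, 3r-4, 3)/n² → 1/(r² - r - 1)`. -/
theorem degenerate_turan_density (r : ℕ) (hr : 3 ≤ r) :
    Tendsto (fun n : ℕ => (sparseTuranNumber n r (3 * r - 4) 3 : ℝ) / n ^ 2)
      atTop (nhds (1 / ((r : ℝ) ^ 2 - r - 1))) :=
  tendsto_order.2 ⟨fun _ ha => eventually_lt_sparseTuranNumber_div_sq hr ha,
    fun _ ha => eventually_sparseTuranNumber_div_sq_lt (by omega) ha⟩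
end
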